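/- arXiv:2303.07710 — 3 statements merged into one kernel-verified Lean document; each statement's English description precedes it below -/
import Mathlib

section
/- Between any pair of non-crossing spanning trees of n points in convex position there exists a flip sequence of length at most 2n − √n + 1 (in particular, 2n − Ω(√n)). -/
open Finset

/-- An edge (chord) on `n` points in convex position, as an unordered pair of indices. -/
abbrev Edge (n : ℕ) := Sym2 (Fin n)

/-- The cyclic successor of a point. -/
def next {n : ℕ} (i : Fin n) : Fin n := ⟨((i : ℕ) + 1) % n, Nat.mod_lt _ i.pos⟩


/-- Chords `{a,b}` (with `a<b`) and `{c,d}` (with `c<d`) cross iff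
`a<c<b<d` or `c<a<d<b`. -/
def Cross {n : ℕ} (e f : Edge n) : Prop :=
  ∃ a b c d : Fin n, e = s(a, b) ∧ f = s(c, d) ∧ a < b ∧ c < d ∧
    ((a < c ∧ c < b ∧ b < d) ∨ (c < a ∧ a < d ∧ d < b))

/-- A set of chords is non-crossing if no two of its chords cross. -/
def NonCrossing {n : ℕ} (E : Finset (Edge n)) : Prop :=
  ∀ e ∈ E, ∀ f ∈ E, ¬ Cross e f

/-- A border edge joins two cyclically consecutive points (this includes `{n-1, 0}`,
i.e. `{v_n, v_1}`, since addition in `Fin n` wraps around). -/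
def IsBorder {n : ℕ} (e : Edge n) : Prop := ∃ i : Fin n, e = s(i, next i)

/-- A spanning tree on the `n` points, given by its edge set: loopless, connected,
with `n - 1` edges. -/
def IsSpanningTree {n : ℕ} (T : Finset (Edge n)) : Prop :=
  (SimpleGraph.fromEdgeSet (T : Set (Edge n))).Connected ∧
    T.card = n - 1 ∧ ∀ e ∈ T, ¬ e.IsDiag

/-- A non-crossing spanning tree. -/
def NCST {n : ℕ} (T : Finset (Edge n)) : Prop := IsSpanningTree T ∧ NonCrossing T

/-- A flip removes one edge and adds another so that the result is again a
non-crossing spanning tree. -/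
def Flip {n : ℕ} (T T' : Finset (Edge n)) : Prop :=
  NCST T ∧ NCST T' ∧ ∃ e ∈ T, ∃ f, f ∉ T ∧ T' = insert f (T.erase e)

/-- A flip sequence of length `k` from `T₁` to `T₂`. -/
def FlipSeq {n : ℕ} (T₁ T₂ : Finset (Edge n)) (k : ℕ) : Prop :=
  ∃ f : ℕ → Finset (Edge n), f 0 = T₁ ∧ f k = T₂ ∧ ∀ i < k, Flip (f i) (f (i + 1))

/-- There is a flip sequence from `T₁` to `T₂` of length at most `m`. -/
def FlipDistLE {n : ℕ} (T₁ T₂ : Finset (Edge n)) (m : ℕ) : Prop :=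
  ∃ k ≤ m, FlipSeq T₁ T₂ k

/-! ### Gap representation of non-crossing spanning trees -/

/-- Compatibility of two (gap, interval) pairs. -/
def GCompat (g : ℕ) (I : ℕ × ℕ) (h : ℕ) (J : ℕ × ℕ) : Prop :=
  I.2 ≤ J.1 ∨ J.2 ≤ I.1 ∨ (J.1 ≤ I.1 ∧ I.2 ≤ J.2 ∧ ¬ (I.1 ≤ h ∧ h < I.2)) ∨
    (I.1 ≤ J.1 ∧ J.2 ≤ I.2 ∧ ¬ (J.1 ≤ g ∧ g < J.2))

theorem GCompat.symm {g h : ℕ} {I J : ℕ × ℕ} (H : GCompat g I h J) : GCompat h J g I := by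
  unfold GCompat at *; omega

/-- A valid assignment of intervals to gaps. -/
def GValid (m : ℕ) (x : ℕ → ℕ × ℕ) : Prop :=
  (∀ g < m, (x g).1 ≤ g ∧ g < (x g).2 ∧ (x g).2 ≤ m) ∧
    ∀ g < m, ∀ h < m, g ≠ h → GCompat g (x g) h (x h)

/-- The chord of an interval. -/
def gEdge (m : ℕ) (I : ℕ × ℕ) : Edge (m + 1) := s(Fin.ofNat (m + 1) I.1, Fin.ofNat (m + 1) I.2)

/-- The tree of an assignment. -/
def gTree (m : ℕ) (x : ℕ → ℕ × ℕ) : Finset (Edge (m + 1)) :=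
  (Finset.range m).image (fun g => gEdge m (x g))

theorem gEdge_eq {m : ℕ} {I : ℕ × ℕ} (h1 : I.1 < I.2) (h2 : I.2 ≤ m) {a b : Fin (m + 1)}
    (h : gEdge m I = s(a, b)) (hab : a < b) : (a : ℕ) = I.1 ∧ (b : ℕ) = I.2 := by
  have e1 : I.1 % (m + 1) = I.1 := Nat.mod_eq_of_lt (by omega)
  have e2 : I.2 % (m + 1) = I.2 := Nat.mod_eq_of_lt (by omega)
  unfold gEdge at h
  rw [Sym2.eq_iff] at h
  have hab' : (a : ℕ) < b := hab
  rcases h with ⟨h3, h4⟩ | ⟨h3, h4⟩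
  · rw [← h3, ← h4]; simp [Fin.ofNat, e1, e2]
  · rw [← h3, ← h4] at hab'
    simp [Fin.ofNat, e1, e2] at hab'
    omega

theorem gEdge_val {m : ℕ} {a b : Fin (m + 1)} : gEdge m ((a : ℕ), (b : ℕ)) = s(a, b) := by
  unfold gEdge
  congr 2 <;> ext <;> simp [Fin.ofNat] <;> omega

theorem gEdge_inj {m : ℕ} {I J : ℕ × ℕ} (h1 : I.1 < I.2) (h2 : I.2 ≤ m) (h3 : J.1 < J.2)
    (h4 : J.2 ≤ m) (h : gEdge m I = gEdge m J) : I = J := by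
  have e1 : J.1 % (m + 1) = J.1 := Nat.mod_eq_of_lt (by omega)
  have e2 : J.2 % (m + 1) = J.2 := Nat.mod_eq_of_lt (by omega)
  have := gEdge_eq h1 h2 (a := Fin.ofNat (m + 1) J.1) (b := Fin.ofNat (m + 1) J.2) h
    (by rw [Fin.lt_def]; simp [Fin.ofNat, e1, e2, h3])
  simp [Fin.ofNat, e1, e2] at this
  ext <;> omega

theorem gValid_inj {m : ℕ} {x : ℕ → ℕ × ℕ} (hx : GValid m x) {g h : ℕ} (hg : g < m) (hh : h < m)
    (e : x g = x h) : g = h := by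
  by_contra hne
  have c := hx.2 g hg h hh hne
  have b1 := hx.1 g hg
  have b2 := hx.1 h hh
  unfold GCompat at c
  rw [e] at c b1
  omega

theorem gReach {m : ℕ} {x : ℕ → ℕ × ℕ} (hx : GValid m x) : ∀ k : ℕ, ∀ g < m,
    (x g).2 - (x g).1 ≤ k →
    (SimpleGraph.fromEdgeSet ((gTree m x : Finset (Edge (m + 1))) : Set (Edge (m + 1)))).Reachable
      (Fin.ofNat (m + 1) g) (Fin.ofNat (m + 1) (g + 1)) := by
  intro k
  induction k with
  | zero => intro g hg hk; have := hx.1 g hg; omega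
  | succ k ih =>
    intro g hg hk
    have b := hx.1 g hg
    set G := SimpleGraph.fromEdgeSet
      ((gTree m x : Finset (Edge (m + 1))) : Set (Edge (m + 1))) with hG
    have step : ∀ h, (x g).1 ≤ h → h < (x g).2 → h ≠ g →
        G.Reachable (Fin.ofNat (m + 1) h) (Fin.ofNat (m + 1) (h + 1)) := by
      intro h h1 h2 h3
      refine ih h (by omega) ?_
      have c := hx.2 g hg h (by omega) (Ne.symm h3)
      have b2 := hx.1 h (by omega)
      unfold GCompat at c
      omega
    have left : ∀ q, (x g).1 ≤ q → q ≤ g →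
        G.Reachable (Fin.ofNat (m + 1) (x g).1) (Fin.ofNat (m + 1) q) := by
      intro q hq
      induction q, hq using Nat.le_induction with
      | base => intro _; exact SimpleGraph.Reachable.refl _
      | succ q hq ihq =>
        intro h
        exact (ihq (by omega)).trans (step q hq (by omega) (by omega))
    have right : ∀ q, g + 1 ≤ q → q ≤ (x g).2 →
        G.Reachable (Fin.ofNat (m + 1) (g + 1)) (Fin.ofNat (m + 1) q) := by
      intro q hq
      induction q, hq using Nat.le_induction with
      | base => intro _; exact SimpleGraph.Reachable.refl _
      | succ q hq ihq =>
        intro h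
        exact (ihq (by omega)).trans (step q (by omega) (by omega) (by omega))
    have mid : G.Adj (Fin.ofNat (m + 1) (x g).1) (Fin.ofNat (m + 1) (x g).2) := by
      rw [hG, SimpleGraph.fromEdgeSet_adj]
      constructor
      · exact Finset.mem_coe.2 (Finset.mem_image.2 ⟨g, Finset.mem_range.2 hg, rfl⟩)
      · intro e
        have e' := congrArg Fin.val e
        have e1 : (x g).1 % (m + 1) = (x g).1 := Nat.mod_eq_of_lt (by omega)
        have e2 : (x g).2 % (m + 1) = (x g).2 := Nat.mod_eq_of_lt (by omega)
        simp [Fin.ofNat, e1, e2] at e'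
        omega
    exact ((left g b.1 le_rfl).symm.trans mid.reachable).trans
      (right (x g).2 (by omega) le_rfl).symm

theorem gTree_ncst {m : ℕ} {x : ℕ → ℕ × ℕ} (hx : GValid m x) : NCST (gTree m x) := by
  refine ⟨⟨?_, ?_, ?_⟩, ?_⟩
  · have key : ∀ q ≤ m, (SimpleGraph.fromEdgeSet
        ((gTree m x : Finset (Edge (m + 1))) : Set (Edge (m + 1)))).Reachable
        (Fin.ofNat (m + 1) 0) (Fin.ofNat (m + 1) q) := by
      intro q
      induction q with
      | zero => intro _; exact SimpleGraph.Reachable.refl _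
      | succ q ih => intro h; exact (ih (by omega)).trans (gReach hx _ q (by omega) le_rfl)
    have key2 : ∀ v : Fin (m + 1), (SimpleGraph.fromEdgeSet
        ((gTree m x : Finset (Edge (m + 1))) : Set (Edge (m + 1)))).Reachable
        (Fin.ofNat (m + 1) 0) v := by
      intro v
      have := key v (by omega)
      have e : Fin.ofNat (m + 1) (v : ℕ) = v := by ext; simp [Fin.ofNat]; omega
      rwa [e] at this
    exact { preconnected := fun u v => (key2 u).symm.trans (key2 v), nonempty := ⟨0⟩ }
  · unfold gTree
    rw [Finset.card_image_of_injOn]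
    · simp
    · intro g hg h hh e
      simp only [Finset.coe_range, Set.mem_Iio] at hg hh
      have b1 := hx.1 g hg
      have b2 := hx.1 h hh
      exact gValid_inj hx hg hh (gEdge_inj (by omega) (by omega) (by omega) (by omega) e)
  · intro e he
    obtain ⟨g, hg, rfl⟩ := Finset.mem_image.1 he
    have b := hx.1 g (Finset.mem_range.1 hg)
    have e1 : (x g).1 % (m + 1) = (x g).1 := Nat.mod_eq_of_lt (by omega)
    have e2 : (x g).2 % (m + 1) = (x g).2 := Nat.mod_eq_of_lt (by omega)
    intro hd
    unfold gEdge at hd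
    rw [Sym2.mk_isDiag_iff] at hd
    have e' := congrArg Fin.val hd
    simp [Fin.ofNat, e1, e2] at e'
    omega
  · rintro e he f hf ⟨a, b, c, d, rfl, rfl, hab, hcd, hc⟩
    obtain ⟨g, hg, h1⟩ := Finset.mem_image.1 he
    obtain ⟨h, hh, h2⟩ := Finset.mem_image.1 hf
    have hg := Finset.mem_range.1 hg
    have hh := Finset.mem_range.1 hh
    have b1 := hx.1 g hg
    have b2 := hx.1 h hh
    have v1 := gEdge_eq (by omega) (by omega) h1 hab
    have v2 := gEdge_eq (by omega) (by omega) h2 hcd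
    simp only [Fin.lt_def] at hc
    by_cases hne : g = h
    · subst hne; omega
    · have cc := hx.2 g hg h hh hne
      unfold GCompat at cc
      omega

theorem cut_edge {m : ℕ} {T : Finset (Edge (m + 1))} (hT : NCST T) (S : Set (Fin (m + 1)))
    {u v : Fin (m + 1)} (hu : u ∈ S) (hv : v ∉ S) :
    ∃ a ∈ S, ∃ b, b ∉ S ∧ s(a, b) ∈ T := by
  obtain ⟨w⟩ := hT.1.1.preconnected u v
  obtain ⟨d, -, h1, h2⟩ := w.exists_boundary_dart S hu hv
  have := d.adj
  rw [SimpleGraph.fromEdgeSet_adj] at this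
  exact ⟨_, h1, _, h2, this.1⟩

theorem exists_gRep {m : ℕ} {T : Finset (Edge (m + 1))} (hT : NCST T) :
    ∃ x, GValid m x ∧ gTree m x = T := by
  -- minimal covering edge of each gap
  have ex : ∀ g, ∃ I : ℕ × ℕ, g < m → (I.1 ≤ g ∧ g < I.2 ∧ I.2 ≤ m ∧ gEdge m I ∈ T) ∧
      ∀ J : ℕ × ℕ, J.1 ≤ g → g < J.2 → J.2 ≤ m → gEdge m J ∈ T →
        I.2 - I.1 ≤ J.2 - J.1 := by
    intro g
    by_cases hg : g < m
    · have ne : ∃ k : ℕ, ∃ I : ℕ × ℕ, I.1 ≤ g ∧ g < I.2 ∧ I.2 ≤ m ∧ gEdge m I ∈ T ∧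
          I.2 - I.1 = k := by
        obtain ⟨a, ha, b, hb, h⟩ := cut_edge hT {v | (v : ℕ) ≤ g} (u := ⟨0, by omega⟩)
          (v := ⟨m, by omega⟩) (by simp) (by simpa using hg)
        simp only [Set.mem_ofPred_eq] at ha hb
        exact ⟨_, ((a : ℕ), (b : ℕ)), ha, by simpa using hb, by simp; omega,
          by rw [gEdge_val]; exact h, rfl⟩
      classical
      obtain ⟨I, h1, h2, h3, h4, h5⟩ := Nat.find_spec ne
      refine ⟨I, fun _ => ⟨⟨h1, h2, h3, h4⟩, fun J j1 j2 j3 j4 => ?_⟩⟩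
      rw [h5]
      exact Nat.find_min' ne ⟨J, j1, j2, j3, j4, rfl⟩
    · exact ⟨(0, 0), fun h => absurd h hg⟩
  choose x hx using ex
  -- non crossing
  have nc : ∀ I J : ℕ × ℕ, I.1 < I.2 → J.1 < J.2 → I.2 ≤ m → J.2 ≤ m → gEdge m I ∈ T →
      gEdge m J ∈ T → ¬ (I.1 < J.1 ∧ J.1 < I.2 ∧ I.2 < J.2) := by
    rintro ⟨a, b⟩ ⟨c, d⟩ h1 h2 h3 h4 h5 h6 h7
    simp only at *
    refine hT.2 _ h5 _ h6 ⟨⟨a, by omega⟩, ⟨b, by omega⟩, ⟨c, by omega⟩, ⟨d, by omega⟩,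
      ?_, ?_, ?_, ?_, Or.inl ⟨?_, ?_, ?_⟩⟩
    · rw [← gEdge_val]
    · rw [← gEdge_val]
    all_goals simp only [Fin.mk_lt_mk]; omega
  have sub : ∀ g < m, ∀ J : ℕ × ℕ, J.1 ≤ g → g < J.2 → J.2 ≤ m → gEdge m J ∈ T →
      J.1 ≤ (x g).1 ∧ (x g).2 ≤ J.2 := by
    intro g hg J j1 j2 j3 j4
    obtain ⟨⟨h1, h2, h3, h4⟩, h5⟩ := hx g hg
    have := h5 J j1 j2 j3 j4
    have n1 := nc _ J (by omega) (by omega) h3 j3 h4 j4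
    have n2 := nc J _ (by omega) (by omega) j3 h3 j4 h4
    omega
  have inj0 : ∀ g < m, ∀ h < m, g < h → x g ≠ x h := by
    intro g hg h hh hgh e
    obtain ⟨⟨g1, g2, g3, g4⟩, -⟩ := hx g hg
    obtain ⟨⟨h1, h2, h3, h4⟩, -⟩ := hx h hh
    obtain ⟨a, ha, b, hb, hab⟩ := cut_edge hT {v | g < (v : ℕ) ∧ (v : ℕ) ≤ h}
      (u := ⟨h, by omega⟩) (v := ⟨0, by omega⟩) (by simpa using hgh) (by simp)
    simp only [Set.mem_ofPred_eq] at ha hb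
    rw [e] at g1
    by_cases hbg : (b : ℕ) ≤ g
    · rw [Sym2.eq_swap, ← gEdge_val] at hab
      have := sub g hg _ hbg ha.1 (by simp; omega) hab
      simp only [e] at this
      omega
    · rw [← gEdge_val] at hab
      have := sub h hh _ ha.2 (by simp only; omega) (by simp only; omega) hab
      simp only at this
      omega
  have inj : ∀ g < m, ∀ h < m, g ≠ h → x g ≠ x h := by
    intro g hg h hh hne
    rcases lt_or_gt_of_ne hne with H | H
    · exact inj0 g hg h hh H
    · exact (inj0 h hh g hg H).symm
  have val : GValid m x := by
    refine ⟨fun g hg => ⟨(hx g hg).1.1, (hx g hg).1.2.1, (hx g hg).1.2.2.1⟩, ?_⟩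
    intro g hg h hh hne
    have hi := inj g hg h hh hne
    obtain ⟨⟨g1, g2, g3, g4⟩, -⟩ := hx g hg
    obtain ⟨⟨h1, h2, h3, h4⟩, -⟩ := hx h hh
    have n1 := nc _ _ (by omega) (by omega) g3 h3 g4 h4
    have n2 := nc _ _ (by omega) (by omega) h3 g3 h4 g4
    have s1 := fun p q => sub g hg (x h) p q h3 h4
    have s2 := fun p q => sub h hh (x g) p q g3 g4
    have hi' : ¬ ((x g).1 = (x h).1 ∧ (x g).2 = (x h).2) := fun ⟨p, q⟩ => hi (Prod.ext p q)
    unfold GCompat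
    by_cases p1 : (x h).1 ≤ g ∧ g < (x h).2
    · have := s1 p1.1 p1.2
      by_cases p2 : (x g).1 ≤ h ∧ h < (x g).2
      · have := s2 p2.1 p2.2
        omega
      · omega
    · by_cases p2 : (x g).1 ≤ h ∧ h < (x g).2
      · have := s2 p2.1 p2.2
        omega
      · omega
  refine ⟨x, val, ?_⟩
  apply Finset.eq_of_subset_of_card_le
  · intro e he
    obtain ⟨g, hg, rfl⟩ := Finset.mem_image.1 he
    exact (hx g (Finset.mem_range.1 hg)).1.2.2.2
  · rw [hT.1.2.1, (gTree_ncst val).1.2.1]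

/-! ### Flip sequences -/

theorem FlipDistLE.refl {n : ℕ} (T : Finset (Edge n)) (m : ℕ) : FlipDistLE T T m :=
  ⟨0, Nat.zero_le _, fun _ => T, rfl, rfl, fun i hi => absurd hi (Nat.not_lt_zero i)⟩

theorem FlipDistLE.trans {n : ℕ} {T₁ T₂ T₃ : Finset (Edge n)} {a b : ℕ}
    (h₁ : FlipDistLE T₁ T₂ a) (h₂ : FlipDistLE T₂ T₃ b) : FlipDistLE T₁ T₃ (a + b) := by
  obtain ⟨k, hk, f, f0, fk, hf⟩ := h₁
  obtain ⟨l, hl, f', f0', fl', hf'⟩ := h₂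
  refine ⟨k + l, by omega, fun i => if i < k then f i else f' (i - k), ?_, ?_, ?_⟩
  · by_cases h : 0 < k
    · simp [h, f0]
    · have : k = 0 := by omega
      subst this
      simp [f0', ← fk, f0]
  · simp [fl']
  · intro i hi
    by_cases h : i + 1 < k
    · have h' : i < k := by omega
      simp only [h, h', if_true]
      exact hf i h'
    · by_cases h' : i < k
      · have e : i + 1 = k := by omega
        have e2 : i + 1 - k = 0 := by omega
        simp only [h, h', if_true, if_false, e2, f0', ← fk]
        have := hf i h'
        rwa [e] at this
      · have e : i + 1 - k = (i - k) + 1 := by omega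
        simp only [h, h', if_false, e]
        exact hf' _ (by omega)

theorem Flip.symm {n : ℕ} {T T' : Finset (Edge n)} (h : Flip T T') : Flip T' T := by
  obtain ⟨h1, h2, e, he, f, hf, rfl⟩ := h
  have hne : e ≠ f := fun h => hf (h ▸ he)
  refine ⟨h2, h1, f, Finset.mem_insert_self _ _, e, ?_, ?_⟩
  · simp [hne]
  · rw [Finset.erase_insert (fun h => hf (Finset.mem_of_mem_erase h)), Finset.insert_erase he]

theorem FlipDistLE.symm {n : ℕ} {T₁ T₂ : Finset (Edge n)} {a : ℕ}
    (h : FlipDistLE T₁ T₂ a) : FlipDistLE T₂ T₁ a := by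
  obtain ⟨k, hk, f, f0, fk, hf⟩ := h
  refine ⟨k, hk, fun i => f (k - i), by simpa using fk, by simpa using f0, ?_⟩
  intro i hi
  have := (hf (k - (i + 1)) (by omega)).symm
  rwa [show k - (i + 1) + 1 = k - i by omega] at this

theorem gTree_congr {m : ℕ} {x y : ℕ → ℕ × ℕ} (h : ∀ g < m, x g = y g) :
    gTree m x = gTree m y := by
  unfold gTree
  apply Finset.image_congr
  intro g hg
  simp only [Finset.coe_range, Set.mem_Iio] at hg
  simp only [h g hg]

/-- Changing one coordinate costs at most one flip. -/
theorem flip_one {m : ℕ} {x y : ℕ → ℕ × ℕ} (hx : GValid m x) (hy : GValid m y) {g : ℕ}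
    (hg : g < m) (h : ∀ k < m, k ≠ g → x k = y k) : FlipDistLE (gTree m x) (gTree m y) 1 := by
  by_cases e : x g = y g
  · rw [gTree_congr (x := x) (y := y)]
    · exact FlipDistLE.refl _ _
    · intro k hk
      by_cases hkg : k = g
      · rw [hkg, e]
      · exact h k hk hkg
  have bx := hx.1 g hg
  have by' := hy.1 g hg
  have hmem : gEdge m (x g) ∈ gTree m x := Finset.mem_image.2 ⟨g, Finset.mem_range.2 hg, rfl⟩
  refine ⟨1, le_rfl, fun i => if i = 0 then gTree m x else gTree m y, by simp, by simp, ?_⟩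
  intro i hi
  have : i = 0 := by omega
  subst this
  simp only [if_true, zero_add, one_ne_zero, if_false]
  refine ⟨gTree_ncst hx, gTree_ncst hy, gEdge m (x g), hmem, gEdge m (y g), ?_, ?_⟩
  · intro hm
    obtain ⟨k, hk, hk2⟩ := Finset.mem_image.1 hm
    have hk := Finset.mem_range.1 hk
    have bk := hx.1 k hk
    have e2 := gEdge_inj (by omega) (by omega) (by omega) (by omega) hk2
    by_cases hkg : k = g
    · subst hkg; exact e e2
    · rw [h k hk hkg] at e2
      exact hkg (gValid_inj hy hk hg e2)
  · ext f
    simp only [gTree, Finset.mem_image, Finset.mem_range, Finset.mem_insert, Finset.mem_erase]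
    constructor
    · rintro ⟨k, hk, rfl⟩
      by_cases hkg : k = g
      · left; rw [hkg]
      · right
        refine ⟨?_, k, hk, by rw [h k hk hkg]⟩
        rw [← h k hk hkg]
        intro e3
        have bk := hx.1 k hk
        exact hkg (gValid_inj hx hk hg (gEdge_inj (by omega) (by omega) (by omega) (by omega) e3))
    · rintro (rfl | ⟨h1, k, hk, rfl⟩)
      · exact ⟨g, hg, rfl⟩
      · have hkg : k ≠ g := by rintro rfl; exact h1 rfl
        exact ⟨k, hk, by rw [h k hk hkg]⟩

/-- Mixed state: `x` on `Z`, `y` on `D \ Z`, border elsewhere. -/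
def mixSt (x y : ℕ → ℕ × ℕ) (D Z : Finset ℕ) : ℕ → ℕ × ℕ :=
  fun g => if g ∈ Z then x g else if g ∈ D then y g else (g, g + 1)

theorem compat_border {g h : ℕ} {J : ℕ × ℕ} (hne : g ≠ h) :
    GCompat g (g, g + 1) h J := by
  unfold GCompat
  simp only
  omega

theorem mix_valid {m : ℕ} {x y : ℕ → ℕ × ℕ} (hx : GValid m x) (hy : GValid m y)
    {D Z : Finset ℕ}
    (H : ∀ g ∈ D, g ∉ Z → ∀ h ∈ Z, GCompat g (y g) h (x h)) : GValid m (mixSt x y D Z) := by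
  constructor
  · intro g hg
    unfold mixSt
    split_ifs
    · exact hx.1 g hg
    · exact hy.1 g hg
    · simp only; omega
  · intro g hg h hh hne
    have bx := hx.1 h hh
    have by' := hy.1 h hh
    have bx' := hx.1 g hg
    have by'' := hy.1 g hg
    unfold mixSt
    split_ifs with h1 h2 h3 h4 h5 h6 h7 h8
    · exact hx.2 g hg h hh hne
    · exact (H h h3 h2 g h1).symm
    · exact (compat_border hne.symm).symm
    · exact H g h4 h1 h h5
    · exact hy.2 g hg h hh hne
    · exact (compat_border hne.symm).symm
    all_goals exact compat_border hne

theorem phase_border {m : ℕ} {x : ℕ → ℕ × ℕ} (hx : GValid m x) (P : Finset ℕ)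
    (hP : P ⊆ Finset.range m) :
    FlipDistLE (gTree m x) (gTree m (mixSt x x ∅ (Finset.range m \ P))) P.card := by
  induction P using Finset.induction_on with
  | empty =>
    rw [gTree_congr (x := x) (y := mixSt x x ∅ (Finset.range m \ ∅))]
    · exact FlipDistLE.refl _ _
    · intro g hg; simp [mixSt, hg]
  | insert g P hgP ih =>
    rw [Finset.card_insert_of_notMem hgP]
    refine (ih (fun a ha => hP (Finset.mem_insert_of_mem ha))).trans ?_
    refine flip_one (g := g) (mix_valid hx hx (by simp)) (mix_valid hx hx (by simp))
      (Finset.mem_range.1 (hP (Finset.mem_insert_self _ _))) ?_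
    intro k hk hkg
    simp [mixSt, hk, hkg]

theorem phase_direct {m : ℕ} {x y : ℕ → ℕ × ℕ} (hx : GValid m x) (hy : GValid m y)
    (Y : Finset ℕ) (hY : Y ⊆ Finset.range m) (r : ℕ → ℕ)
    (H : ∀ g ∈ Y, ∀ h ∈ Y, g ≠ h → r g ≤ r h → GCompat g (y g) h (x h)) :
    ∀ k, ∀ Z ⊆ Y, Z.card = k → (∀ g ∈ Y, g ∉ Z → ∀ h ∈ Z, r g ≤ r h) →
      FlipDistLE (gTree m (mixSt x y Y Z)) (gTree m (mixSt x y Y ∅)) k := by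
  intro k
  induction k with
  | zero =>
    intro Z _ hc _
    rw [Finset.card_eq_zero.1 hc]
    exact FlipDistLE.refl _ _
  | succ k ih =>
    intro Z hZ hc hr
    have hne : Z.Nonempty := Finset.card_pos.1 (by omega)
    obtain ⟨g, hg, hmin⟩ := Finset.exists_min_image Z r hne
    have hr' : ∀ g' ∈ Y, g' ∉ Z.erase g → ∀ h ∈ Z.erase g, r g' ≤ r h := by
      intro g' h1 h2 h h3
      have h4 := Finset.mem_of_mem_erase h3
      by_cases e : g' = g
      · rw [e]; exact hmin h h4
      · exact hr g' h1 (fun h5 => h2 (Finset.mem_erase.2 ⟨e, h5⟩)) h h4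
    have hZ' : Z.erase g ⊆ Y := (Finset.erase_subset _ _).trans hZ
    have V : ∀ W ⊆ Y, (∀ g ∈ Y, g ∉ W → ∀ h ∈ W, r g ≤ r h) → GValid m (mixSt x y Y W) := by
      intro W hW hWr
      refine mix_valid hx hy ?_
      intro a ha haW b hb
      exact H a ha b (hW hb) (by rintro rfl; exact haW hb) (hWr a ha haW b hb)
    rw [add_comm k 1]
    refine FlipDistLE.trans (T₂ := gTree m (mixSt x y Y (Z.erase g))) ?_
      (ih (Z.erase g) hZ' (by rw [Finset.card_erase_of_mem hg]; omega) hr')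
    refine flip_one (g := g) (V Z hZ hr) (V _ hZ' hr') (Finset.mem_range.1 (hY (hZ hg))) ?_
    intro j hj hjg
    simp [mixSt, hjg]

/-- gaps whose edge is the border edge -/
def shorts (m : ℕ) (x : ℕ → ℕ × ℕ) : Finset ℕ := {g ∈ Finset.range m | x g = (g, g + 1)}

/-- gaps strictly inside their edge -/
def wides (m : ℕ) (x : ℕ → ℕ × ℕ) : Finset ℕ :=
  {g ∈ Finset.range m | (x g).1 < g ∧ g + 1 < (x g).2}

theorem phase_border' {m : ℕ} {x : ℕ → ℕ × ℕ} (hx : GValid m x) (Y : Finset ℕ)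
    (hY : Y ⊆ Finset.range m) (hs : Disjoint Y (shorts m x)) :
    FlipDistLE (gTree m x) (gTree m (mixSt x x ∅ Y)) (m - (Y.card + (shorts m x).card)) := by
  have hsub : Y ∪ shorts m x ⊆ Finset.range m :=
    Finset.union_subset hY (Finset.filter_subset _ _)
  have h := phase_border hx (Finset.range m \ (Y ∪ shorts m x)) Finset.sdiff_subset
  rw [Finset.card_sdiff_of_subset hsub, Finset.card_union_of_disjoint hs, Finset.card_range] at h
  rw [gTree_congr (x := mixSt x x ∅ (Finset.range m \ (Finset.range m \ (Y ∪ shorts m x))))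
    (y := mixSt x x ∅ Y)] at h
  · exact h
  · intro g hg
    simp only [mixSt, Finset.mem_sdiff, Finset.mem_range, hg, Finset.mem_union, true_and, not_not,
      Finset.notMem_empty, if_false]
    by_cases h1 : g ∈ Y
    · simp [h1]
    · by_cases h2 : g ∈ shorts m x
      · simp only [h1, h2, or_true, if_true, if_false]
        exact (Finset.mem_filter.1 h2).2
      · simp [h1, h2]

theorem flip_main {m : ℕ} {x y : ℕ → ℕ × ℕ} (hx : GValid m x) (hy : GValid m y)
    (Y : Finset ℕ) (hY : Y ⊆ Finset.range m) (hsx : Disjoint Y (shorts m x))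
    (hsy : Disjoint Y (shorts m y)) (r : ℕ → ℕ)
    (H : ∀ g ∈ Y, ∀ h ∈ Y, g ≠ h → r g ≤ r h → GCompat g (y g) h (x h)) :
    ∃ k, FlipSeq (gTree m x) (gTree m y) k ∧
      k + (Y.card + (shorts m x).card + (shorts m y).card) ≤ 2 * m := by
  have p1 := phase_border' hx Y hY hsx
  have p3 := (phase_border' hy Y hY hsy).symm
  have p2 := phase_direct hx hy Y hY r H Y.card Y subset_rfl rfl (fun g h1 h2 => absurd h1 h2)
  have e1 : gTree m (mixSt x x ∅ Y) = gTree m (mixSt x y Y Y) := by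
    apply gTree_congr
    intro g _
    by_cases h : g ∈ Y <;> simp [mixSt, h]
  have e2 : gTree m (mixSt y y ∅ Y) = gTree m (mixSt x y Y ∅) := by
    apply gTree_congr
    intro g _
    by_cases h : g ∈ Y <;> simp [mixSt, h]
  rw [e1] at p1
  rw [e2] at p3
  obtain ⟨k, hk, hf⟩ := (p1.trans p2).trans p3
  refine ⟨k, hf, ?_⟩
  have c1 : Y.card + (shorts m x).card ≤ m := by
    rw [← Finset.card_union_of_disjoint hsx]
    simpa using Finset.card_le_card
      (Finset.union_subset hY (Finset.filter_subset _ _) : Y ∪ shorts m x ⊆ Finset.range m)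
  have c2 : Y.card + (shorts m y).card ≤ m := by
    rw [← Finset.card_union_of_disjoint hsy]
    simpa using Finset.card_le_card
      (Finset.union_subset hY (Finset.filter_subset _ _) : Y ∪ shorts m y ⊆ Finset.range m)
  omega

theorem wides_le {m : ℕ} {x : ℕ → ℕ × ℕ} (hx : GValid m x) :
    (wides m x).card ≤ (shorts m x).card := by
  set R := {g ∈ Finset.range m | g + 1 < (x g).2} with hR
  set L := {g ∈ Finset.range m | (x g).1 < g} with hL
  have h1 : R ∩ L = wides m x := by
    ext g; simp only [hR, hL, wides, Finset.mem_inter, Finset.mem_filter]; tauto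
  have h2 : R ∪ L = Finset.range m \ shorts m x := by
    ext g
    simp only [hR, hL, shorts, Finset.mem_union, Finset.mem_filter, Finset.mem_sdiff,
      Finset.mem_range, Prod.ext_iff]
    constructor
    · rintro (h | h)
      · exact ⟨h.1, by omega⟩
      · exact ⟨h.1, by omega⟩
    · rintro ⟨hg, h⟩
      have := hx.1 g hg
      omega
  have h3 : (R ∪ L).card + (shorts m x).card = m := by
    rw [h2, Finset.card_sdiff_add_card_eq_card
      (show shorts m x ⊆ Finset.range m from Finset.filter_subset _ _), Finset.card_range]
  have h4 := Finset.card_union_add_card_inter R L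
  have h5 : (L.image (fun g => g - 1)).card = L.card := by
    apply Finset.card_image_of_injOn
    intro a ha b hb e
    simp only [hL, Finset.coe_filter, Set.mem_ofPred_eq] at ha hb e
    omega
  have h6 : Disjoint R (L.image (fun g => g - 1)) := by
    rw [Finset.disjoint_left]
    intro g hg hg'
    obtain ⟨h, hh, e⟩ := Finset.mem_image.1 hg'
    simp only [hR, hL, Finset.mem_filter, Finset.mem_range] at hg hh
    have c := hx.2 g hg.1 h hh.1 (by omega)
    have b1 := hx.1 g hg.1
    have b2 := hx.1 h hh.1
    unfold GCompat at c
    omega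
  have h7 : R ∪ L.image (fun g => g - 1) ⊆ Finset.range m := by
    intro g hg
    simp only [hR, hL, Finset.mem_union, Finset.mem_image, Finset.mem_filter,
      Finset.mem_range] at hg ⊢
    rcases hg with h | ⟨h, h', e⟩ <;> omega
  have h8 := Finset.card_le_card h7
  rw [Finset.card_union_of_disjoint h6, h5, Finset.card_range] at h8
  rw [h1] at h4
  omega

theorem flip_quarter {m : ℕ} {x y : ℕ → ℕ × ℕ} (hx : GValid m x) (hy : GValid m y) :
    ∃ k S, FlipSeq (gTree m x) (gTree m y) k ∧ k + S ≤ 2 * m ∧ m ≤ 4 * S := by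
  set N := Finset.range m \ (shorts m x ∪ shorts m y ∪ (wides m x ∪ wides m y)) with hN
  have hNs : ∀ g ∈ N, g < m ∧ g ∉ shorts m x ∧ g ∉ shorts m y ∧
      ((x g).1 = g ∨ (x g).2 = g + 1) ∧ ((y g).1 = g ∨ (y g).2 = g + 1) := by
    intro g hg
    simp only [hN, Finset.mem_sdiff, Finset.mem_union, not_or, Finset.mem_range] at hg
    obtain ⟨h0, ⟨h1, h2⟩, h3, h4⟩ := hg
    simp only [wides, Finset.mem_filter, Finset.mem_range, h0, true_and] at h3 h4
    have := hx.1 g h0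
    have := hy.1 g h0
    exact ⟨h0, h1, h2, by omega, by omega⟩
  have hcard : m ≤ N.card + 2 * (shorts m x).card + 2 * (shorts m y).card := by
    have a1 := Finset.le_card_sdiff (shorts m x ∪ shorts m y ∪ (wides m x ∪ wides m y))
      (Finset.range m)
    have a2 := Finset.card_union_le (shorts m x ∪ shorts m y) (wides m x ∪ wides m y)
    have a3 := Finset.card_union_le (shorts m x) (shorts m y)
    have a4 := Finset.card_union_le (wides m x) (wides m y)
    have a5 := wides_le hx
    have a6 := wides_le hy
    rw [Finset.card_range, ← hN] at a1
    omega
  have run : ∀ Y ⊆ N, ∀ r : ℕ → ℕ,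
      (∀ g ∈ Y, ∀ h ∈ Y, g ≠ h → r g ≤ r h → GCompat g (y g) h (x h)) →
      ∃ k, FlipSeq (gTree m x) (gTree m y) k ∧
        k + (Y.card + (shorts m x).card + (shorts m y).card) ≤ 2 * m := by
    intro Y hY r H
    refine flip_main hx hy Y (hY.trans Finset.sdiff_subset) ?_ ?_ r H
    · exact Finset.disjoint_left.2 fun g hg => (hNs g (hY hg)).2.1
    · exact Finset.disjoint_left.2 fun g hg => (hNs g (hY hg)).2.2.1
  -- the four classes
  set A := {g ∈ N | (y g).1 ≤ (x g).1 ∧ (x g).2 ≤ (y g).2} with hA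
  set B := {g ∈ N | (x g).1 ≤ (y g).1 ∧ (y g).2 ≤ (x g).2} with hB
  set C := {g ∈ N | (x g).1 = g ∧ (y g).2 = g + 1} with hC
  set D := {g ∈ N | (x g).2 = g + 1 ∧ (y g).1 = g} with hD
  obtain ⟨kA, fA, cA⟩ := run A (Finset.filter_subset _ _) (fun g => m - ((y g).2 - (y g).1)) (by
    intro g hg h hh hne hr
    simp only [hA, Finset.mem_filter] at hg hh
    have hg0 := (hNs g hg.1).1
    have hh0 := (hNs h hh.1).1
    have c := hy.2 g hg0 h hh0 hne
    have b1 := hy.1 g hg0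
    have b2 := hy.1 h hh0
    have b3 := hx.1 h hh0
    unfold GCompat at *
    omega)
  obtain ⟨kB, fB, cB⟩ := run B (Finset.filter_subset _ _) (fun g => ((x g).2 - (x g).1)) (by
    intro g hg h hh hne hr
    simp only [hB, Finset.mem_filter] at hg hh
    have hg0 := (hNs g hg.1).1
    have hh0 := (hNs h hh.1).1
    have c := hx.2 g hg0 h hh0 hne
    have b1 := hx.1 g hg0
    have b2 := hx.1 h hh0
    have b3 := hy.1 g hg0
    unfold GCompat at *
    omega)
  obtain ⟨kC, fC, cC⟩ := run C (Finset.filter_subset _ _) (fun g => g) (by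
    intro g hg h hh hne hr
    simp only [hC, Finset.mem_filter] at hg hh
    unfold GCompat
    omega)
  obtain ⟨kD, fD, cD⟩ := run D (Finset.filter_subset _ _) (fun g => m - g) (by
    intro g hg h hh hne hr
    simp only [hD, Finset.mem_filter] at hg hh
    have hg0 := (hNs g hg.1).1
    have hh0 := (hNs h hh.1).1
    unfold GCompat
    omega)
  have cover : N ⊆ (A ∪ B) ∪ (C ∪ D) := by
    intro g hg
    obtain ⟨h0, -, -, h1, h2⟩ := hNs g hg
    simp only [hA, hB, hC, hD, Finset.mem_union, Finset.mem_filter, hg, true_and]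
    have b1 := hx.1 g h0
    have b2 := hy.1 g h0
    omega
  have t0 := Finset.card_le_card cover
  have t1 := Finset.card_union_le (A ∪ B) (C ∪ D)
  have t2 := Finset.card_union_le A B
  have t3 := Finset.card_union_le C D
  by_cases q1 : N.card ≤ 4 * A.card
  · exact ⟨kA, _, fA, cA, by omega⟩
  by_cases q2 : N.card ≤ 4 * B.card
  · exact ⟨kB, _, fB, cB, by omega⟩
  by_cases q3 : N.card ≤ 4 * C.card
  · exact ⟨kC, _, fC, cC, by omega⟩
  · exact ⟨kD, _, fD, cD, by omega⟩

/-- Between any pair of non-crossing spanning trees there is a flip sequence of length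
at most `2n - √n + 1`. -/
theorem flip_dist_sqrt {n : ℕ} (T₁ T₂ : Finset (Edge n))
    (h₁ : NCST T₁) (h₂ : NCST T₂) :
    ∃ k : ℕ, FlipSeq T₁ T₂ k ∧ (k : ℝ) ≤ 2 * n - Real.sqrt n + 1 := by
  cases n with
  | zero => exact (h₁.1.1.nonempty.some).elim0
  | succ m =>
    obtain ⟨x, hx, rfl⟩ := exists_gRep h₁
    obtain ⟨y, hy, rfl⟩ := exists_gRep h₂
    obtain ⟨k, S, hf, hk, hS⟩ := flip_quarter hx hy
    refine ⟨k, hf, ?_⟩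
    have hk' : (k : ℝ) + S ≤ 2 * m := by exact_mod_cast hk
    have hS' : (m : ℝ) ≤ 4 * S := by exact_mod_cast hS
    have hm : (0 : ℝ) ≤ m := Nat.cast_nonneg m
    have hs : Real.sqrt ((m + 1 : ℕ) : ℝ) ≤ m / 4 + 3 := by
      rw [Real.sqrt_le_left (by positivity)]
      push_cast
      nlinarith
    push_cast at hs ⊢
    linarith
end

section
/- Let T₁, T₂ be non-crossing spanning trees on n points in convex position, where T₁ is a nice caterpillar. Then there is a flip sequence between T₁ and T₂ of length at most (3/2) n. -/
open Finset

open scoped Classical in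
/-- Degree of a vertex in an edge set. -/
noncomputable def degree {n : ℕ} (T : Finset (Edge n)) (v : Fin n) : ℕ :=
  (T.filter (fun e => v ∈ e)).card

/-- An internal node is a non-leaf, i.e. a vertex of degree at least 2. -/
def Internal {n : ℕ} (T : Finset (Edge n)) (v : Fin n) : Prop := 2 ≤ degree T v

/-- A caterpillar: the internal nodes induce a path. -/
def IsCaterpillar {n : ℕ} (T : Finset (Edge n)) : Prop :=
  ∃ l : List (Fin n), l.Nodup ∧ (∀ v : Fin n, Internal T v ↔ v ∈ l) ∧
    ∀ (i : ℕ) (h : i + 1 < l.length),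
      s(l.get ⟨i, by omega⟩, l.get ⟨i + 1, h⟩) ∈ T

/-- The chord `{v,w}` separates `u` from `x`: exactly one of `u, x` lies strictly
inside the arc cut off by the chord. -/
def Separates {n : ℕ} (v w u x : Fin n) : Prop :=
  Xor' (min v w < u ∧ u < max v w) (min v w < x ∧ x < max v w)

/-- A nice caterpillar: for every path `u-v-w-x` on four distinct vertices with `v, w`
internal, the chord `{v,w}` separates `u` from `x`. -/
def NiceCaterpillar {n : ℕ} (T : Finset (Edge n)) : Prop :=
  IsCaterpillar T ∧
    ∀ u v w x : Fin n, [u, v, w, x].Nodup →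
      s(u, v) ∈ T → s(v, w) ∈ T → s(w, x) ∈ T →
      Internal T v → Internal T w → Separates v w u x


namespace NCF

/-- Compatibility of interval `I` labelled `g` with interval `J` labelled `h`. -/
def Compat (g : ℕ) (I : ℕ × ℕ) (h : ℕ) (J : ℕ × ℕ) : Prop :=
  I.2 ≤ J.1 ∨ J.2 ≤ I.1 ∨ (J.1 ≤ I.1 ∧ I.2 ≤ J.2 ∧ (h < I.1 ∨ I.2 ≤ h)) ∨
    (I.1 ≤ J.1 ∧ J.2 ≤ I.2 ∧ (g < J.1 ∨ J.2 ≤ g))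

theorem Compat.symm {g h : ℕ} {I J : ℕ × ℕ} (H : Compat g I h J) : Compat h J g I := by
  unfold Compat at *; tauto

structure Valid (N : ℕ) (G : ℕ → ℕ × ℕ) : Prop where
  le : ∀ g < N, (G g).1 ≤ g
  lt : ∀ g < N, g < (G g).2
  bd : ∀ g < N, (G g).2 ≤ N
  co : ∀ g < N, ∀ h < N, g ≠ h → Compat g (G g) h (G h)

def edge (N : ℕ) (I : ℕ × ℕ) : Edge (N + 1) := s(Fin.ofNat (N + 1) I.1, Fin.ofNat (N + 1) I.2)

def tree (N : ℕ) (G : ℕ → ℕ × ℕ) : Finset (Edge (N + 1)) :=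
  (Finset.range N).image (fun g => edge N (G g))

theorem ofNat_val {N a : ℕ} (h : a ≤ N) : ((Fin.ofNat (N + 1) a : Fin (N+1)) : ℕ) = a := by
  simp [Fin.ofNat]; omega

theorem edge_inj {N : ℕ} {I J : ℕ × ℕ} (h1 : I.1 < I.2) (h2 : I.2 ≤ N) (h3 : J.1 < J.2)
    (h4 : J.2 ≤ N) (h : edge N I = edge N J) : I = J := by
  unfold edge at h
  rw [Sym2.eq_iff] at h
  simp only [Fin.ext_iff] at h
  rw [ofNat_val (by omega), ofNat_val (by omega), ofNat_val (by omega), ofNat_val (by omega)] at h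
  ext <;> omega

theorem Valid.ne {N : ℕ} {G : ℕ → ℕ × ℕ} (hG : Valid N G) {g h : ℕ} (hg : g < N) (hh : h < N)
    (hne : g ≠ h) : G g ≠ G h := by
  intro he
  have := hG.co g hg h hh hne
  have a1 := hG.le g hg
  have a2 := hG.lt g hg
  have a3 := hG.le h hh
  have a4 := hG.lt h hh
  unfold Compat at this
  rw [he] at *
  omega

theorem Valid.edge_inj {N : ℕ} {G : ℕ → ℕ × ℕ} (hG : Valid N G) {g h : ℕ} (hg : g < N)
    (hh : h < N) (he : edge N (G g) = edge N (G h)) : g = h := by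
  by_contra hne
  have a1 := hG.le g hg
  have a2 := hG.lt g hg
  have a3 := hG.le h hh
  have a4 := hG.lt h hh
  exact hG.ne hg hh hne (NCF.edge_inj (by omega) (hG.bd g hg) (by omega) (hG.bd h hh) he)

theorem Valid.reach {N : ℕ} {G : ℕ → ℕ × ℕ} (hG : Valid N G) : ∀ k g : ℕ, g < N →
    (G g).2 - (G g).1 ≤ k →
    (SimpleGraph.fromEdgeSet (tree N G : Set (Edge (N+1)))).Reachable
      (Fin.ofNat (N+1) g) (Fin.ofNat (N+1) (g+1)) := by
  intro k
  induction k with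
  | zero =>
    intro g hg hk
    have := hG.le g hg
    have := hG.lt g hg
    omega
  | succ k ih =>
    intro g hg hk
    have h1 := hG.le g hg
    have h2 := hG.lt g hg
    have h3 := hG.bd g hg
    have key : ∀ h, (G g).1 ≤ h → h < (G g).2 → h ≠ g →
      (SimpleGraph.fromEdgeSet (tree N G : Set (Edge (N+1)))).Reachable
      (Fin.ofNat (N+1) h) (Fin.ofNat (N+1) (h+1)) := by
      intro h ha hb hne
      apply ih h (by omega)
      have := hG.co g hg h (by omega) hne.symm
      have := hG.le h (by omega)
      have := hG.lt h (by omega)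
      unfold Compat at *
      omega
    have chain : ∀ d a, (∀ h, a ≤ h → h < a + d →
      (SimpleGraph.fromEdgeSet (tree N G : Set (Edge (N+1)))).Reachable
      (Fin.ofNat (N+1) h) (Fin.ofNat (N+1) (h+1))) →
      (SimpleGraph.fromEdgeSet (tree N G : Set (Edge (N+1)))).Reachable
      (Fin.ofNat (N+1) a) (Fin.ofNat (N+1) (a+d)) := by
      intro d a
      induction d with
      | zero => intro _; exact SimpleGraph.Reachable.refl _
      | succ d ihd =>
        intro H
        exact (ihd (fun h x y => H h x (by omega))).trans (H (a+d) (by omega) (by omega))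
    have c1 := chain (g - (G g).1) (G g).1 (fun h x y => key h x (by omega) (by omega))
    have c2 := chain ((G g).2 - (g+1)) (g+1) (fun h x y => key h (by omega) (by omega) (by omega))
    rw [show (G g).1 + (g - (G g).1) = g by omega] at c1
    rw [show g + 1 + ((G g).2 - (g+1)) = (G g).2 by omega] at c2
    refine c1.symm.trans (SimpleGraph.Reachable.trans ?_ c2.symm)
    apply SimpleGraph.Adj.reachable
    rw [SimpleGraph.fromEdgeSet_adj]
    refine ⟨?_, ?_⟩
    · simp only [tree, Finset.coe_image, Set.mem_image]
      exact ⟨g, by simpa using hg, rfl⟩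
    · intro he
      rw [Fin.ext_iff, ofNat_val (by omega), ofNat_val (by omega)] at he
      omega

theorem Valid.ncst {N : ℕ} {G : ℕ → ℕ × ℕ} (hG : Valid N G) : NCST (tree N G) := by
  refine ⟨⟨?_, ?_, ?_⟩, ?_⟩
  · rw [SimpleGraph.connected_iff_exists_forall_reachable]
    refine ⟨Fin.ofNat (N+1) 0, ?_⟩
    have : ∀ k, k ≤ N → (SimpleGraph.fromEdgeSet (tree N G : Set (Edge (N+1)))).Reachable
      (Fin.ofNat (N+1) 0) (Fin.ofNat (N+1) k) := by
      intro k
      induction k with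
      | zero => intro _; exact SimpleGraph.Reachable.refl _
      | succ k ih => intro hk; exact (ih (by omega)).trans (hG.reach _ k (by omega) le_rfl)
    intro w
    have h := this w (by omega)
    have e : Fin.ofNat (N+1) (w : ℕ) = w := Fin.ext (ofNat_val (by omega))
    rwa [e] at h
  · unfold tree
    rw [Finset.card_image_of_injOn]
    · simp
    · intro g hg h hh he
      exact hG.edge_inj (by simpa using hg) (by simpa using hh) he
  · intro e he
    simp only [tree, Finset.mem_image, Finset.mem_range] at he
    obtain ⟨g, hg, rfl⟩ := he
    have h1 := hG.le g hg
    have h2 := hG.lt g hg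
    have h3 := hG.bd g hg
    simp only [edge, Sym2.mk_isDiag_iff]
    intro he
    rw [Fin.ext_iff, ofNat_val (by omega), ofNat_val (by omega)] at he
    omega
  · intro e he f hf
    simp only [tree, Finset.mem_image, Finset.mem_range] at he hf
    obtain ⟨g, hg, rfl⟩ := he
    obtain ⟨h, hh, rfl⟩ := hf
    have h1 := hG.le g hg
    have h2 := hG.lt g hg
    have h3 := hG.bd g hg
    have h4 := hG.le h hh
    have h5 := hG.lt h hh
    have h6 := hG.bd h hh
    rintro ⟨a, b, c, d, e1, e2, hab, hcd, hx⟩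
    unfold edge at e1 e2
    rw [Sym2.eq_iff] at e1 e2
    simp only [Fin.ext_iff] at e1 e2
    rw [ofNat_val (by omega), ofNat_val (by omega)] at e1 e2
    simp only [Fin.lt_def] at *
    by_cases hgh : g = h
    · subst hgh; omega
    · have := hG.co g hg h hh hgh
      unfold Compat at this
      omega

theorem FD_refl {n : ℕ} (T : Finset (Edge n)) (k : ℕ) : FlipDistLE T T k :=
  ⟨0, Nat.zero_le _, fun _ => T, rfl, rfl, fun i hi => absurd hi (by omega)⟩

theorem FD_trans {n : ℕ} {T U W : Finset (Edge n)} {a b : ℕ} (h1 : FlipDistLE T U a)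
    (h2 : FlipDistLE U W b) : FlipDistLE T W (a + b) := by
  obtain ⟨k, hk, f, f0, fk, hf⟩ := h1
  obtain ⟨l, hl, g, g0, gl, hg⟩ := h2
  refine ⟨k + l, by omega, fun i => if i ≤ k then f i else g (i - k), by simp [f0], ?_, ?_⟩
  · by_cases h : l = 0
    · subst h; simp; rw [fk, ← g0, gl]
    · simp only [show ¬ (k + l ≤ k) by omega, if_false, show k + l - k = l by omega, gl]
  · intro i hi
    by_cases h : i + 1 ≤ k
    · simp only [h, show i ≤ k by omega, if_true]; exact hf i (by omega)
    · by_cases h' : i = k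
      · subst h'
        simp only [le_refl, if_true, h, if_false, show i + 1 - i = 1 by omega, fk, ← g0]
        exact hg 0 (by omega)
      · simp only [h, show ¬ i ≤ k by omega, if_false]
        rw [show i + 1 - k = (i - k) + 1 by omega]
        exact hg _ (by omega)

theorem FD_step {N : ℕ} {G : ℕ → ℕ × ℕ} {g : ℕ} {v : ℕ × ℕ} (hg : g < N) (hG : Valid N G)
    (hG' : Valid N (Function.update G g v)) :
    FlipDistLE (tree N G) (tree N (Function.update G g v)) 1 := by
  by_cases hv : v = G g
  · subst hv; rw [Function.update_eq_self]; exact FD_refl _ _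
  refine ⟨1, le_rfl, fun i => if i = 0 then tree N G else tree N (Function.update G g v),
    by simp, by simp, ?_⟩
  intro i hi
  obtain rfl : i = 0 := by omega
  simp only [if_true, zero_add, one_ne_zero, if_false]
  refine ⟨hG.ncst, hG'.ncst, edge N (G g), ?_, edge N v, ?_, ?_⟩
  · simp only [tree, Finset.mem_image, Finset.mem_range]; exact ⟨g, hg, rfl⟩
  · simp only [tree, Finset.mem_image, Finset.mem_range]
    rintro ⟨h, hh, he⟩
    by_cases hgh : h = g
    · subst hgh
      have a1 := hG.le h hh
      have a2 := hG.lt h hh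
      have a3 := hG'.le h hh
      have a4 := hG'.lt h hh
      have a5 := hG'.bd h hh
      simp only [Function.update_self] at a3 a4 a5
      exact hv (edge_inj (by omega) (hG.bd h hh) (by omega) a5 he).symm
    · apply hgh
      apply hG'.edge_inj hh hg
      simp [Function.update_of_ne hgh, he]
  · ext e
    simp only [tree, Finset.mem_image, Finset.mem_range, Finset.mem_insert, Finset.mem_erase]
    constructor
    · rintro ⟨h, hh, rfl⟩
      by_cases hgh : h = g
      · subst hgh; left; simp
      · right
        rw [Function.update_of_ne hgh]
        exact ⟨fun he => hgh (hG.edge_inj hh hg he), h, hh, rfl⟩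
    · rintro (rfl | ⟨hne, h, hh, rfl⟩)
      · exact ⟨g, hg, by simp⟩
      · have hgh : h ≠ g := by rintro rfl; exact hne rfl
        exact ⟨h, hh, by rw [Function.update_of_ne hgh]⟩

/-- Sweep lemma. -/
theorem sweep {N : ℕ} (G' : ℕ → ℕ × ℕ) (hG' : Valid N G') (ρ : ℕ → ℕ) :
    ∀ (k : ℕ) (G : ℕ → ℕ × ℕ), Valid N G →
    ((Finset.range N).filter (fun g => G g ≠ G' g)).card = k →
    (∀ g < N, ∀ h < N, G g ≠ G' g → G h ≠ G' h → g ≠ h → ρ g ≠ ρ h) →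
    (∀ g < N, ∀ h < N, G g ≠ G' g → G h ≠ G' h → ρ g < ρ h → Compat g (G' g) h (G h)) →
    FlipDistLE (tree N G) (tree N G') k := by
  intro k
  induction k with
  | zero =>
    intro G hG hc _ _
    have : tree N G = tree N G' := by
      unfold tree
      apply Finset.image_congr
      intro g hg
      rw [Finset.card_eq_zero, Finset.filter_eq_empty_iff] at hc
      have := hc (by simpa using hg)
      simp only [not_not] at this
      simp [this]
    rw [this]; exact FD_refl _ _
  | succ k ih =>
    intro G hG hc hinj hco
    obtain ⟨g, hgm, hmin⟩ := Finset.exists_min_image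
      ((Finset.range N).filter (fun g => G g ≠ G' g)) ρ (Finset.card_pos.1 (by omega))
    have hgm' := hgm
    simp only [Finset.mem_filter, Finset.mem_range] at hgm hmin
    obtain ⟨hg, hd⟩ := hgm
    have comp : ∀ h < N, h ≠ g → Compat g (G' g) h (G h) := by
      intro h hh hne
      by_cases hdh : G h = G' h
      · rw [hdh]; exact hG'.co g hg h hh hne.symm
      · have := hmin h ⟨hh, hdh⟩
        have := hinj g hg h hh hd hdh hne.symm
        exact hco g hg h hh hd hdh (by omega)
    have hV : Valid N (Function.update G g (G' g)) := by
      constructor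
      · intro h hh
        by_cases e : h = g
        · subst e; simpa using hG'.le h hh
        · rw [Function.update_of_ne e]; exact hG.le h hh
      · intro h hh
        by_cases e : h = g
        · subst e; simpa using hG'.lt h hh
        · rw [Function.update_of_ne e]; exact hG.lt h hh
      · intro h hh
        by_cases e : h = g
        · subst e; simpa using hG'.bd h hh
        · rw [Function.update_of_ne e]; exact hG.bd h hh
      · intro a ha b hb hne
        by_cases e1 : a = g
        · subst e1
          rw [Function.update_self, Function.update_of_ne (Ne.symm hne)]
          exact comp b hb (Ne.symm hne)
        · by_cases e2 : b = g
          · subst e2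
            rw [Function.update_self, Function.update_of_ne hne]
            exact (comp a ha hne).symm
          · rw [Function.update_of_ne e1, Function.update_of_ne e2]
            exact hG.co a ha b hb hne
    have hdiff : ∀ h, Function.update G g (G' g) h ≠ G' h → h ≠ g ∧ G h ≠ G' h := by
      intro h hh
      by_cases e : h = g
      · subst e; simp at hh
      · rw [Function.update_of_ne e] at hh; exact ⟨e, hh⟩
    have h1 := FD_step hg hG hV
    have h2 := ih (Function.update G g (G' g)) hV ?_ ?_ ?_
    · rw [add_comm k 1]; exact FD_trans h1 h2
    · have : (Finset.range N).filter (fun h => Function.update G g (G' g) h ≠ G' h) =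
          ((Finset.range N).filter (fun h => G h ≠ G' h)).erase g := by
        ext h
        simp only [Finset.mem_filter, Finset.mem_erase, Finset.mem_range]
        constructor
        · rintro ⟨a, b⟩; exact ⟨(hdiff h b).1, a, (hdiff h b).2⟩
        · rintro ⟨a, b, c⟩; exact ⟨b, by rw [Function.update_of_ne a]; exact c⟩
      rw [this, Finset.card_erase_of_mem hgm', hc]; rfl
    · intro a ha b hb da db hne
      exact hinj a ha b hb (hdiff a da).2 (hdiff b db).2 hne
    · intro a ha b hb da db hlt
      rw [Function.update_of_ne (hdiff b db).1]
      exact hco a ha b hb (hdiff a da).2 (hdiff b db).2 hlt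

/-- Cut lemma: a connected edge set has an edge leaving any proper nonempty vertex set. -/
theorem cut {n : ℕ} {T : Finset (Edge n)} (hT : NCST T) (S : Set (Fin n)) (u v : Fin n)
    (hu : u ∈ S) (hv : v ∉ S) : ∃ a b : Fin n, a ∈ S ∧ b ∉ S ∧ s(a, b) ∈ T := by
  obtain ⟨p⟩ := hT.1.1.preconnected u v
  obtain ⟨d, _, h1, h2⟩ := p.exists_boundary_dart S hu hv
  have := d.adj
  rw [SimpleGraph.fromEdgeSet_adj] at this
  exact ⟨d.fst, d.snd, h1, h2, by simpa using this.1⟩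

theorem noncross {n : ℕ} {T : Finset (Edge n)} (hT : NCST T) {a b c d : Fin n}
    (h1 : s(a, b) ∈ T) (h2 : s(c, d) ∈ T) : ¬ (a < c ∧ c < b ∧ b < d) := by
  rintro ⟨x, y, z⟩
  exact hT.2 _ h1 _ h2 ⟨a, b, c, d, rfl, rfl, x.trans y, y.trans z, Or.inl ⟨x, y, z⟩⟩

theorem exists_valid {N : ℕ} {T : Finset (Edge (N + 1))} (hT : NCST T) :
    ∃ G, Valid N G ∧ tree N G = T := by
  have ex : ∀ g, g < N → ∃ L : ℕ, ∃ I : ℕ × ℕ, I.2 - I.1 = L ∧ I.1 ≤ g ∧ g < I.2 ∧ I.2 ≤ N ∧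
      edge N I ∈ T := by
    intro g hg
    obtain ⟨a, b, ha, hb, he⟩ := cut hT {x | (x : ℕ) ≤ g} ⟨0, by omega⟩ ⟨N, by omega⟩
      (by simp) (by simp; omega)
    simp only [Set.mem_ofPred_eq, not_le] at ha hb
    refine ⟨_, (a, b), rfl, ha, hb, by simp; omega, ?_⟩
    have e1 : Fin.ofNat (N+1) (a : ℕ) = a := Fin.ext (ofNat_val (by omega))
    have e2 : Fin.ofNat (N+1) (b : ℕ) = b := Fin.ext (ofNat_val (by omega))
    simpa [edge, e1, e2] using he
  have ex2 : ∀ g, ∃ I : ℕ × ℕ, g < N → (I.1 ≤ g ∧ g < I.2 ∧ I.2 ≤ N ∧ edge N I ∈ T ∧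
      ∀ J : ℕ × ℕ, J.1 ≤ g → g < J.2 → J.2 ≤ N → edge N J ∈ T → I.2 - I.1 ≤ J.2 - J.1) := by
    classical
    intro g
    by_cases hg : g < N
    · obtain ⟨I, h1, h2, h3, h4, h5⟩ := Nat.find_spec (ex g hg)
      refine ⟨I, fun _ => ⟨h2, h3, h4, h5, ?_⟩⟩
      intro J a b c d
      rw [h1]
      exact Nat.find_min' (ex g hg) ⟨J, rfl, a, b, c, d⟩
    · exact ⟨(0, 0), fun h => absurd h hg⟩
  choose G hG using ex2
  -- noncrossing in terms of intervals
  have nc : ∀ I J : ℕ × ℕ, I.1 < I.2 → I.2 ≤ N → J.1 < J.2 → J.2 ≤ N → edge N I ∈ T →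
      edge N J ∈ T → ¬ (I.1 < J.1 ∧ J.1 < I.2 ∧ I.2 < J.2) := by
    intro I J a b c d e f h
    apply noncross hT e f
    simp only [Fin.lt_def]
    rw [ofNat_val (by omega), ofNat_val (by omega), ofNat_val (by omega), ofNat_val (by omega)]
    exact h
  have inj : ∀ g h, g < h → h < N → G g ≠ G h := by
    intro g h hgh hh he
    obtain ⟨a1, a2, a3, a4, a5⟩ := hG g (by omega)
    obtain ⟨b1, b2, b3, b4, b5⟩ := hG h (by omega)
    rw [← he] at b1 b2 b3 b4 b5
    obtain ⟨u, v, hu, hv, huv⟩ := cut hT {x | g < (x : ℕ) ∧ (x : ℕ) ≤ h} ⟨h, by omega⟩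
      ⟨g, by omega⟩ (by simp; omega) (by simp)
    simp only [Set.mem_ofPred_eq, not_and, not_le] at hu hv
    have e1 : Fin.ofNat (N+1) (u : ℕ) = u := Fin.ext (ofNat_val (by omega))
    have e2 : Fin.ofNat (N+1) (v : ℕ) = v := Fin.ext (ofNat_val (by omega))
    have E1 : edge N (u, v) ∈ T := by simpa [edge, e1, e2] using huv
    have E2 : edge N (v, u) ∈ T := by simpa [edge, e1, e2, Sym2.eq_swap] using huv
    rcases Nat.lt_or_ge g (v : ℕ) with h' | h'
    · have := hv h'
      have m := b5 (u, v) hu.2 this (by simp; omega) E1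
      have n1 := nc (G g) (u, v) (by omega) a3 (by simp; omega) (by simp; omega) a4 E1
      simp only at m n1
      omega
    · have m := a5 (v, u) h' hu.1 (by simp; omega) E2
      have n1 := nc (v, u) (G g) (by simp; omega) (by simp; omega) (by omega) a3 E2 a4
      simp only at m n1
      omega
  have hV : Valid N G := by
    refine ⟨fun g hg => (hG g hg).1, fun g hg => (hG g hg).2.1, fun g hg => (hG g hg).2.2.1, ?_⟩
    intro g hg h hh hne
    obtain ⟨a1, a2, a3, a4, a5⟩ := hG g hg
    obtain ⟨b1, b2, b3, b4, b5⟩ := hG h hh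
    have hn : G g ≠ G h := by
      rcases Nat.lt_or_gt_of_ne hne with x | x
      · exact inj g h x hh
      · exact (inj h g x hg).symm
    have hn' : ¬ ((G g).1 = (G h).1 ∧ (G g).2 = (G h).2) := fun x => hn (Prod.ext x.1 x.2)
    have n1 := nc (G g) (G h) (by omega) a3 (by omega) b3 a4 b4
    have n2 := nc (G h) (G g) (by omega) b3 (by omega) a3 b4 a4
    have m1 := fun x y => a5 (G h) x y b3 b4
    have m2 := fun x y => b5 (G g) x y a3 a4
    unfold Compat
    by_cases c1 : (G h).1 ≤ g <;> by_cases c2 : g < (G h).2 <;>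
    by_cases c3 : (G g).1 ≤ h <;> by_cases c4 : h < (G g).2 <;>
    simp only [c1, c2, c3, c4, forall_true_left] at m1 m2 <;> omega
  refine ⟨G, hV, ?_⟩
  apply Finset.eq_of_subset_of_card_le
  · intro e he
    simp only [tree, Finset.mem_image, Finset.mem_range] at he
    obtain ⟨g, hg, rfl⟩ := he
    exact (hG g hg).2.2.2.1
  · rw [hT.1.2.1, hV.ncst.1.2.1]

theorem exists_short {N : ℕ} {G : ℕ → ℕ × ℕ} (hG : Valid N G) : ∀ k g : ℕ, g < N →
    (G g).2 - (G g).1 ≤ k → ∃ h < N, G h = (h, h + 1) := by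
  intro k
  induction k with
  | zero =>
    intro g hg hk
    have := hG.le g hg
    have := hG.lt g hg
    omega
  | succ k ih =>
    intro g hg hk
    have h1 := hG.le g hg
    have h2 := hG.lt g hg
    have h3 := hG.bd g hg
    by_cases hs : G g = (g, g+1)
    · exact ⟨g, hg, hs⟩
    have hs' : ¬ ((G g).1 = g ∧ (G g).2 = g + 1) := fun x => hs (Prod.ext x.1 x.2)
    have key : ∀ h, (G g).1 ≤ h → h < (G g).2 → h ≠ g → ∃ h < N, G h = (h, h + 1) := by
      intro h ha hb hne
      apply ih h (by omega)
      have := hG.co g hg h (by omega) hne.symm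
      have := hG.le h (by omega)
      have := hG.lt h (by omega)
      unfold Compat at *
      omega
    by_cases h4 : (G g).1 = g
    · exact key (g+1) (by omega) (by omega) (by omega)
    · exact key (g-1) (by omega) (by omega) (by omega)

theorem short_ge_wide {N : ℕ} {G : ℕ → ℕ × ℕ} (hG : Valid N G) :
    ((Finset.range N).filter (fun g => (G g).1 < g ∧ g + 1 < (G g).2)).card ≤
    ((Finset.range N).filter (fun g => G g = (g, g + 1))).card := by
  have key : ∀ k, k ≤ N →
      (((Finset.range k).filter (fun g => (G g).1 < g ∧ g + 1 < (G g).2)).card ≤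
      ((Finset.range k).filter (fun g => G g = (g, g + 1))).card) ∧
      (1 ≤ k → (G (k-1)).2 = k →
        ((Finset.range k).filter (fun g => (G g).1 < g ∧ g + 1 < (G g).2)).card + 1 ≤
      ((Finset.range k).filter (fun g => G g = (g, g + 1))).card) := by
    intro k
    induction k with
    | zero => intro _; simp
    | succ k ih =>
      intro hk
      obtain ⟨i1, i2⟩ := ih (by omega)
      have h1 := hG.le k (by omega)
      have h2 := hG.lt k (by omega)
      have prev : (G k).1 < k → 1 ≤ k ∧ (G (k-1)).2 = k := by
        intro h
        have := hG.co k (by omega) (k-1) (by omega) (by omega)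
        have := hG.le (k-1) (by omega)
        have := hG.lt (k-1) (by omega)
        unfold Compat at *
        omega
      rw [Finset.range_add_one, Finset.filter_insert, Finset.filter_insert]
      simp only [Nat.add_sub_cancel]
      have e : G k = (k, k+1) ↔ ((G k).1 = k ∧ (G k).2 = k + 1) := by
        constructor
        · intro h; rw [h]; simp
        · intro h; exact Prod.ext h.1 h.2
      have e2 : k ∉ (Finset.range k).filter (fun g => (G g).1 < g ∧ g + 1 < (G g).2) := by simp
      have e3 : k ∉ (Finset.range k).filter (fun g => G g = (g, g + 1)) := by simp
      split_ifs with c1 c2 c2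
      · rw [e] at c2; omega
      · rw [Finset.card_insert_of_notMem e2]
        have := prev c1.1
        have := i2 this.1 this.2
        omega
      · rw [Finset.card_insert_of_notMem e3]
        omega
      · rw [e] at c2
        refine ⟨i1, fun _ h => ?_⟩
        have := prev (by omega)
        exact i2 this.1 this.2
  exact (key N le_rfl).1

theorem compat_border {g h : ℕ} {J : ℕ × ℕ} (hne : g ≠ h) : Compat g (g, g+1) h J := by
  unfold Compat; simp only; omega

/-- States mixing borders and a valid state are valid. -/
theorem Valid.mix {N : ℕ} {G : ℕ → ℕ × ℕ} (hG : Valid N G) (S : ℕ → Prop) [DecidablePred S] :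
    Valid N (fun g => if S g then G g else (g, g+1)) := by
  constructor
  · intro g hg; by_cases h : S g <;> simp [h, hG.le g hg]
  · intro g hg; by_cases h : S g <;> simp [h, hG.lt g hg]
  · intro g hg; by_cases h : S g
    · simp [h, hG.bd g hg]
    · simp [h]; omega
  · intro a ha b hb hne
    by_cases h1 : S a
    · by_cases h2 : S b
      · simpa [h1, h2] using hG.co a ha b hb hne
      · simp only [h1, h2, if_true, if_false]; exact (compat_border hne.symm).symm
    · simp only [h1, if_false]; exact compat_border hne

theorem three_phase {N : ℕ} {F G : ℕ → ℕ × ℕ} (hF : Valid N F) (hG : Valid N G) (ρ : ℕ → ℕ)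
    (S : ℕ → Prop) [DecidablePred S]
    (hinj : ∀ g < N, ∀ h < N, g ≠ h → ρ g ≠ ρ h)
    (hco : ∀ g < N, ∀ h < N, S g → ρ g < ρ h → Compat g (G g) h (F h)) :
    FlipDistLE (tree N F) (tree N G)
      (N + ((Finset.range N).filter (fun g => ¬ S g ∧ G g ≠ (g, g+1))).card) := by
  have p1 := sweep _ (hF.mix S) id _ F hF rfl (fun g _ h _ _ _ hne => hne) (by
    intro g hg h hh d1 d2 hlt
    have : ¬ S g := by intro hs; simp [hs] at d1
    simp only [this, if_false]
    exact compat_border (ne_of_lt hlt))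
  have p2 := sweep _ (hG.mix S) ρ _ _ (hF.mix S) rfl
    (fun g hg h hh _ _ hne => hinj g hg h hh hne) (by
    intro g hg h hh d1 d2 hlt
    have s1 : S g := by by_contra hs; simp [hs] at d1
    have s2 : S h := by by_contra hs; simp [hs] at d2
    simp only [s1, s2, if_true]
    exact hco g hg h hh s1 hlt)
  have p3 := sweep _ hG id _ _ (hG.mix S) rfl (fun g _ h _ _ _ hne => hne) (by
    intro g hg h hh d1 d2 hlt
    have : ¬ S h := by intro hs; simp [hs] at d2
    simp only [this, if_false]
    exact (compat_border (ne_of_gt hlt)).symm)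
  obtain ⟨k, hk, hs⟩ := FD_trans (FD_trans p1 p2) p3
  refine ⟨k, hk.trans ?_, hs⟩
  have c1 : ((Finset.range N).filter (fun g => F g ≠ if S g then F g else (g, g+1))).card ≤
      ((Finset.range N).filter (fun g => ¬ S g)).card := by
    apply Finset.card_le_card
    intro g
    simp only [Finset.mem_filter]
    rintro ⟨a, b⟩
    exact ⟨a, fun hs => by simp [hs] at b⟩
  have c2 : ((Finset.range N).filter (fun g => (if S g then F g else (g, g+1)) ≠
      if S g then G g else (g, g+1))).card ≤ ((Finset.range N).filter (fun g => S g)).card := by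
    apply Finset.card_le_card
    intro g
    simp only [Finset.mem_filter]
    rintro ⟨a, b⟩
    exact ⟨a, by by_contra hs; simp [hs] at b⟩
  have c3 : ((Finset.range N).filter (fun g => (if S g then G g else (g, g+1)) ≠ G g)).card ≤
      ((Finset.range N).filter (fun g => ¬ S g ∧ G g ≠ (g, g+1))).card := by
    apply Finset.card_le_card
    intro g
    simp only [Finset.mem_filter]
    rintro ⟨a, b⟩
    refine ⟨a, fun hs => by simp [hs] at b, fun hs => ?_⟩
    by_cases h : S g <;> simp [h, hs] at b
  have c4 := Finset.card_filter_add_card_filter_not (s := Finset.range N) S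
  rw [Finset.card_range] at c4
  have c5 : ((Finset.range N).filter (fun g => S g)).card = ((Finset.range N).filter S).card := rfl
  omega

theorem main_straddle {N c : ℕ} {F G : ℕ → ℕ × ℕ} (hF : Valid N F) (hG : Valid N G) (hc : c < N)
    (hs : ∀ g < N, (F g).1 ≤ c ∧ c < (F g).2) :
    ∃ k, FlipSeq (tree N F) (tree N G) k ∧ 2 * k ≤ 3 * N := by
  classical
  -- shape of F
  have shape1 : ∀ g < c, (F g).1 = g := by
    intro g hg
    have h1 := hF.le g (by omega)
    have h2 := hs g (by omega)
    by_contra hne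
    have := hF.co g (by omega) (F g).1 (by omega) (by omega)
    have := hF.le (F g).1 (by omega)
    have := hF.lt (F g).1 (by omega)
    have := hs (F g).1 (by omega)
    unfold Compat at *
    omega
  have shape2 : ∀ g, c < g → g < N → (F g).2 = g + 1 := by
    intro g hg hgN
    have h1 := hF.lt g (by omega)
    have h2 := hs g (by omega)
    have h3 := hF.bd g (by omega)
    by_contra hne
    have := hF.co g (by omega) ((F g).2 - 1) (by omega) (by omega)
    have := hF.le ((F g).2 - 1) (by omega)
    have := hF.lt ((F g).2 - 1) (by omega)
    have := hs ((F g).2 - 1) (by omega)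
    unfold Compat at *
    omega
  let len : ℕ → ℕ := fun g => (F g).2 - (F g).1
  have dich : ∀ g < N, ∀ h < N, len g < len h → 
      ((F h).1 ≤ (F g).1 ∧ (F g).2 ≤ (F h).2 ∧ (h < (F g).1 ∨ (F g).2 ≤ h)) := by
    intro g hg h hh hl
    have hne : g ≠ h := by rintro rfl; omega
    have := hF.co g hg h hh hne
    have := hs g hg
    have := hs h hh
    simp only [len] at hl
    unfold Compat at *
    omega
  have hinj : ∀ g < N, ∀ h < N, g ≠ h → len g ≠ len h := by
    intro g hg h hh hne
    have := hF.co g hg h hh hne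
    have := hF.le g hg
    have := hF.lt g hg
    have := hF.le h hh
    have := hF.lt h hh
    have := hs g hg
    have := hs h hh
    simp only [len]
    unfold Compat at *
    omega
  have lenle : ∀ g < N, len g ≤ N := by
    intro g hg
    have := hF.bd g hg
    simp only [len]; omega
  let D : ℕ → Prop := fun g => ∀ h < N, len g < len h → Compat g (G g) h (F h)
  let U : ℕ → Prop := fun g => ∀ h < N, len h < len g → Compat g (G g) h (F h)
  have hD := three_phase hF hG len D hinj (fun g _ h hh hs' hlt => hs' h hh hlt)
  have hU := three_phase hF hG (fun g => N - len g) U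
    (by
      intro g hg h hh hne
      have := hinj g hg h hh hne
      have := lenle g hg
      have := lenle h hh
      omega)
    (fun g hg h hh hs' hlt => hs' h hh (by have := lenle g hg; have := lenle h hh; omega))
  have near : ∀ g < N, ((G g).1 = g ∨ (G g).2 = g + 1) → D g ∨ U g := by
    intro g hg hn
    have g1 := hG.le g hg
    have g2 := hG.lt g hg
    have f1 := hF.le g hg
    have f2 := hF.lt g hg
    have s1 := shape1 g
    have s2 := shape2 g
    have sg := hs g hg
    by_cases sub : (F g).1 ≤ (G g).1 ∧ (G g).2 ≤ (F g).2
    · left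
      intro h hh hl
      have := dich g hg h hh hl
      unfold Compat; omega
    · right
      intro h hh hl
      have := dich h hh g hg hl
      unfold Compat
      rcases lt_trichotomy g c with x | x | x
      · have := s1 x; omega
      · omega
      · have := s2 x hg; omega
  have cnt : ((Finset.range N).filter (fun g => ¬ D g ∧ G g ≠ (g, g+1))).card +
      ((Finset.range N).filter (fun g => ¬ U g ∧ G g ≠ (g, g+1))).card ≤ N := by
    have sw := short_ge_wide hG
    have e1 := Finset.card_filter_add_card_filter_not (s := Finset.range N)
      (fun g => G g = (g, g+1))
    rw [Finset.card_range] at e1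
    have e2 := Finset.card_union_add_card_inter
      ((Finset.range N).filter (fun g => ¬ D g ∧ G g ≠ (g, g+1)))
      ((Finset.range N).filter (fun g => ¬ U g ∧ G g ≠ (g, g+1)))
    have e3 : ((Finset.range N).filter (fun g => ¬ D g ∧ G g ≠ (g, g+1)) ∪
      (Finset.range N).filter (fun g => ¬ U g ∧ G g ≠ (g, g+1))).card ≤
      ((Finset.range N).filter (fun g => ¬ G g = (g, g+1))).card := by
      apply Finset.card_le_card
      intro g
      simp only [Finset.mem_union, Finset.mem_filter]
      tauto
    have e4 : ((Finset.range N).filter (fun g => ¬ D g ∧ G g ≠ (g, g+1)) ∩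
      (Finset.range N).filter (fun g => ¬ U g ∧ G g ≠ (g, g+1))).card ≤
      ((Finset.range N).filter (fun g => (G g).1 < g ∧ g + 1 < (G g).2)).card := by
      apply Finset.card_le_card
      intro g
      simp only [Finset.mem_inter, Finset.mem_filter, Finset.mem_range]
      rintro ⟨⟨hg, a, b⟩, ⟨_, a', _⟩⟩
      refine ⟨hg, ?_⟩
      have g1 := hG.le g hg
      have g2 := hG.lt g hg
      have := near g hg
      by_contra hcon
      rcases this (by omega) with x | x
      · exact a x
      · exact a' x
    omega
  obtain ⟨k1, hk1, q1⟩ := hD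
  obtain ⟨k2, hk2, q2⟩ := hU
  by_cases hle : 2 * k1 ≤ 3 * N
  · exact ⟨k1, q1, hle⟩
  · exact ⟨k2, q2, by omega⟩

def Zig {n : ℕ} (T : Finset (Edge n)) : Prop :=
  ∀ u v w x : Fin n, [u, v, w, x].Nodup → s(u, v) ∈ T → s(v, w) ∈ T → s(w, x) ∈ T →
    Separates v w u x

theorem sep_iff {n : ℕ} {v w u z : Fin n} : Separates v w u z ↔
        ((((v : ℕ) < u ∧ (u : ℕ) < w ∨ (w : ℕ) < u ∧ (u : ℕ) < v) ∧
          ¬ ((v : ℕ) < z ∧ (z : ℕ) < w ∨ (w : ℕ) < z ∧ (z : ℕ) < v)) ∨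
        (¬((v : ℕ) < u ∧ (u : ℕ) < w ∨ (w : ℕ) < u ∧ (u : ℕ) < v) ∧
          ((v : ℕ) < z ∧ (z : ℕ) < w ∨ (w : ℕ) < z ∧ (z : ℕ) < v))) := by
  have key : Separates v w u z ↔ (((min v w < u ∧ u < max v w) ∧ ¬ (min v w < z ∧ z < max v w)) ∨
      ((min v w < z ∧ z < max v w) ∧ ¬ (min v w < u ∧ u < max v w))) := Iff.rfl
  rw [key]
  rcases le_total v w with hvw | hvw
  · rw [min_eq_left hvw, max_eq_right hvw]
    rw [Fin.le_def] at hvw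
    simp only [Fin.lt_def]
    omega
  · rw [min_eq_right hvw, max_eq_left hvw]
    rw [Fin.le_def] at hvw
    simp only [Fin.lt_def]
    omega

theorem internal_of {n : ℕ} {T : Finset (Edge n)} {u v w : Fin n} (h1 : s(u, v) ∈ T)
    (h2 : s(v, w) ∈ T) (huw : u ≠ w) : Internal T v := by
  classical
  unfold Internal degree
  have : ({s(u, v), s(v, w)} : Finset (Edge n)) ⊆ T.filter (fun e => v ∈ e) := by
    intro e he
    simp only [Finset.mem_insert, Finset.mem_singleton] at he
    rcases he with rfl | rfl <;> simp [h1, h2]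
  have hc := Finset.card_le_card this
  rw [Finset.card_pair] at hc
  · convert hc
  · intro h
    rw [Sym2.eq_iff] at h
    rcases h with ⟨a, b⟩ | ⟨a, _⟩
    · exact huw (a.trans b)
    · exact huw a

theorem zig_of_nice {n : ℕ} {T : Finset (Edge n)} (h : NiceCaterpillar T) : Zig T := by
  intro u v w x hnd h1 h2 h3
  refine h.2 u v w x hnd h1 h2 h3 ?_ ?_
  · exact internal_of h1 h2 (by intro e; subst e; simp at hnd)
  · exact internal_of h2 h3 (by intro e; subst e; simp at hnd)

theorem mem_tree_interval {N : ℕ} {G : ℕ → ℕ × ℕ} (hG : Valid N G) {a b : Fin (N+1)}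
    (hab : a < b) (h : s(a, b) ∈ tree N G) : ∃ g < N, G g = ((a : ℕ), (b : ℕ)) := by
  simp only [tree, Finset.mem_image, Finset.mem_range] at h
  obtain ⟨g, hg, he⟩ := h
  have h1 := hG.le g hg
  have h2 := hG.lt g hg
  have h3 := hG.bd g hg
  refine ⟨g, hg, ?_⟩
  unfold edge at he
  rw [Sym2.eq_iff] at he
  simp only [Fin.ext_iff] at he
  rw [ofNat_val (by omega), ofNat_val (by omega)] at he
  rw [Fin.lt_def] at hab
  ext <;> simp only <;> omega

theorem no_triangle {N : ℕ} {T : Finset (Edge (N+1))} (hT : NCST T) {x u y : Fin (N+1)}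
    (h1 : x < u) (h2 : u < y) (e1 : s(x, u) ∈ T) (e2 : s(u, y) ∈ T) (e3 : s(x, y) ∈ T) : False := by
  obtain ⟨G, hG, rfl⟩ := exists_valid hT
  obtain ⟨g1, k1, q1⟩ := mem_tree_interval hG h1 e1
  obtain ⟨g2, k2, q2⟩ := mem_tree_interval hG h2 e2
  obtain ⟨g3, k3, q3⟩ := mem_tree_interval hG (h1.trans h2) e3
  rw [Fin.lt_def] at h1 h2
  have n1 : g1 ≠ g3 := by rintro rfl; rw [q1, Prod.ext_iff] at q3; simp only at q3; omega
  have n2 : g2 ≠ g3 := by rintro rfl; rw [q2, Prod.ext_iff] at q3; simp only at q3; omega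
  have c1 := hG.co g1 k1 g3 k3 n1
  have c2 := hG.co g2 k2 g3 k3 n2
  have l := hG.le g3 k3
  have r := hG.lt g3 k3
  have l1 := hG.le g1 k1
  have r1 := hG.lt g1 k1
  have l2 := hG.le g2 k2
  have r2 := hG.lt g2 k2
  rw [q1, q3] at c1
  rw [q2, q3] at c2
  rw [q3] at l r
  rw [q1] at l1 r1
  rw [q2] at l2 r2
  unfold Compat at *
  simp only at *
  omega

theorem zig_chain {N : ℕ} {T : Finset (Edge (N+1))} (hT : NCST T) (hZ : Zig T) : ∀ (d : ℕ)
    (x y : Fin (N+1)), (y : ℕ) = x + d + 1 → s(x, y) ∈ T →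
    ∃ c : ℕ, (x : ℕ) ≤ c ∧ c < (y : ℕ) ∧ ∀ a b : Fin (N+1), s(a, b) ∈ T → a < b → x ≤ a → b ≤ y →
      (a : ℕ) ≤ c ∧ c < (b : ℕ) := by
  intro d
  induction d with
  | zero =>
    intro x y hxy _
    refine ⟨x, le_rfl, by omega, ?_⟩
    intro a b _ hab hxa hby
    rw [Fin.lt_def] at hab
    rw [Fin.le_def] at hxa hby
    omega
  | succ d ih =>
    intro x y hxy he
    have sw : ∀ {a b : Fin (N+1)}, s(a, b) ∈ T → s(b, a) ∈ T := by
      intro a b h; rwa [Sym2.eq_swap]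
    have nc : ∀ {a b p q : Fin (N+1)}, s(a, b) ∈ T → s(p, q) ∈ T →
        ¬ ((a : ℕ) < p ∧ (p : ℕ) < b ∧ (b : ℕ) < q) := fun h1 h2 => noncross hT h1 h2
    have hz : ∀ u v w z : Fin (N+1), s(u, v) ∈ T → s(v, w) ∈ T → s(w, z) ∈ T →
        (u : ℕ) ≠ v → (u : ℕ) ≠ w → (u : ℕ) ≠ z → (v : ℕ) ≠ w → (v : ℕ) ≠ z → (w : ℕ) ≠ z →
        Separates v w u z := by
      intro u v w z h1 h2 h3 a b c d e f
      apply hZ u v w z _ h1 h2 h3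
      simp only [List.nodup_cons, List.mem_cons, List.not_mem_nil, Fin.ext_iff]
      simp; omega
    have sep := fun {v w u z : Fin (N+1)} => (sep_iff (v := v) (w := w) (u := u) (z := z)).1
    by_cases hA : ∃ u : Fin (N+1), (x : ℕ) < u ∧ (u : ℕ) < y ∧ s(x, u) ∈ T
    · by_cases hB : ∃ w : Fin (N+1), (x : ℕ) < w ∧ (w : ℕ) < y ∧ s(y, w) ∈ T
      · exfalso
        obtain ⟨u, u1, u2, u3⟩ := hA
        obtain ⟨w, w1, w2, w3⟩ := hB
        by_cases huw : u = w
        · subst huw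
          exact no_triangle hT u1 u2 u3 (sw w3) he
        · have : (u : ℕ) ≠ w := fun h => huw (Fin.ext h)
          have := sep (hz u x y w (sw u3) he w3 (by omega) (by omega) (by omega) (by omega)
            (by omega) (by omega))
          omega
      · obtain ⟨u, hu, hmax⟩ := Finset.exists_max_image (Finset.univ.filter
          (fun u : Fin (N+1) => (x : ℕ) < u ∧ (u : ℕ) < y ∧ s(x, u) ∈ T)) (fun u => (u : ℕ))
          (by obtain ⟨u, hu⟩ := hA; exact ⟨u, by simpa using hu⟩)
        simp only [Finset.mem_filter, Finset.mem_univ, true_and] at hu hmax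
        obtain ⟨u1, u2, u3⟩ := hu
        have hu' : (u : ℕ) + 1 = y := by
          by_contra hne
          obtain ⟨a, b, ha, hb, hab⟩ := cut hT {z | (u : ℕ) < z ∧ (z : ℕ) < y}
            ⟨u + 1, by omega⟩ y
            (show (u : ℕ) < u + 1 ∧ (u : ℕ) + 1 < y by omega) (by simp)
          simp only [Set.mem_ofPred_eq, not_and, not_lt] at ha hb
          have n1 := nc he hab
          have n2 := nc (sw hab) he
          have n3 := nc u3 (sw hab)
          have b1 : b ≠ x := by
            rintro rfl
            have := hmax a ⟨by omega, ha.2, sw hab⟩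
            omega
          have b2 : b ≠ y := by
            rintro rfl
            exact hB ⟨a, by omega, ha.2, sw hab⟩
          have b3 : b ≠ u := by
            rintro rfl
            have := sep (hz y x b a (sw he) u3 (sw hab) (by omega) (by omega) (by omega) (by omega)
              (by omega) (by omega))
            omega
          rw [Ne, Fin.ext_iff] at b1 b2 b3
          omega
        obtain ⟨c, c1, c2, c3⟩ := ih x u (by omega) u3
        refine ⟨c, c1, by omega, ?_⟩
        intro a b hab hlt hxa hby
        by_cases hb : b = y
        · subst hb
          rw [Fin.lt_def] at hlt
          rw [Fin.le_def] at hxa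
          by_cases hax : (a : ℕ) = x
          · omega
          · exact absurd ⟨a, by omega, hlt, sw hab⟩ hB
        · rw [Fin.ext_iff] at hb
          rw [Fin.le_def] at hby
          exact c3 a b hab hlt hxa (by rw [Fin.le_def]; omega)
    · by_cases hB : ∃ w : Fin (N+1), (x : ℕ) < w ∧ (w : ℕ) < y ∧ s(y, w) ∈ T
      · obtain ⟨u, hu, hmin⟩ := Finset.exists_min_image (Finset.univ.filter
          (fun u : Fin (N+1) => (x : ℕ) < u ∧ (u : ℕ) < y ∧ s(y, u) ∈ T)) (fun u => (u : ℕ))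
          (by obtain ⟨u, hu⟩ := hB; exact ⟨u, by simpa using hu⟩)
        simp only [Finset.mem_filter, Finset.mem_univ, true_and] at hu hmin
        obtain ⟨u1, u2, u3⟩ := hu
        have hu' : (u : ℕ) = x + 1 := by
          by_contra hne
          obtain ⟨a, b, ha, hb, hab⟩ := cut hT {z | (x : ℕ) < z ∧ (z : ℕ) < u}
            ⟨x + 1, by omega⟩ u
            (show (x : ℕ) < x + 1 ∧ (x : ℕ) + 1 < u by omega) (by simp)
          simp only [Set.mem_ofPred_eq, not_and, not_lt] at ha hb
          have n1 := nc he hab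
          have n2 := nc (sw hab) he
          have n3 := nc hab (sw u3)
          have b1 : b ≠ y := by
            rintro rfl
            have := hmin a ⟨by omega, by omega, sw hab⟩
            omega
          have b2 : b ≠ x := by
            rintro rfl
            exact hA ⟨a, by omega, by omega, sw hab⟩
          have b3 : b ≠ u := by
            rintro rfl
            have := sep (hz x y b a he u3 (sw hab) (by omega) (by omega) (by omega) (by omega)
              (by omega) (by omega))
            omega
          rw [Ne, Fin.ext_iff] at b1 b2 b3
          omega
        obtain ⟨c, c1, c2, c3⟩ := ih u y (by omega) (sw u3)
        refine ⟨c, by omega, c2, ?_⟩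
        intro a b hab hlt hxa hby
        by_cases ha : a = x
        · subst ha
          rw [Fin.lt_def] at hlt
          rw [Fin.le_def] at hby
          by_cases hbx : (b : ℕ) = y
          · omega
          · exact absurd ⟨b, by omega, by omega, hab⟩ hA
        · rw [Fin.ext_iff] at ha
          rw [Fin.le_def] at hxa
          exact c3 a b hab hlt (by rw [Fin.le_def]; omega) hby
      · exfalso
        obtain ⟨a, b, ha, hb, hab⟩ := cut hT {z | (x : ℕ) < z ∧ (z : ℕ) < y}
            ⟨x + 1, by omega⟩ y
            (show (x : ℕ) < x + 1 ∧ (x : ℕ) + 1 < y by omega) (by simp)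
        simp only [Set.mem_ofPred_eq, not_and, not_lt] at ha hb
        have n1 := nc he hab
        have n2 := nc (sw hab) he
        have b1 : b ≠ x := by
          rintro rfl
          exact hA ⟨a, by omega, by omega, sw hab⟩
        have b2 : b ≠ y := by
          rintro rfl
          exact hB ⟨a, by omega, by omega, sw hab⟩
        rw [Ne, Fin.ext_iff] at b1 b2
        omega

/-- Case where the border edge `{0,N}` is in `T₁`. -/
theorem main_top {N : ℕ} {T₁ T₂ : Finset (Edge (N+1))} (h₁ : NCST T₁) (h₂ : NCST T₂)
    (hZ : Zig T₁) (hN : 0 < N) (he : s((⟨0, by omega⟩ : Fin (N+1)), ⟨N, by omega⟩) ∈ T₁) :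
    ∃ k, FlipSeq T₁ T₂ k ∧ 2 * k ≤ 3 * N := by
  obtain ⟨c, c1, c2, c3⟩ := zig_chain h₁ hZ (N-1) ⟨0, by omega⟩ ⟨N, by omega⟩ (by simp; omega) he
  obtain ⟨F, hF, rfl⟩ := exists_valid h₁
  obtain ⟨G, hG, rfl⟩ := exists_valid h₂
  apply main_straddle hF hG c2
  intro g hg
  have h1 := hF.le g hg
  have h2 := hF.lt g hg
  have h3 := hF.bd g hg
  have := c3 (Fin.ofNat (N+1) (F g).1) (Fin.ofNat (N+1) (F g).2)
    (by simp only [tree, Finset.mem_image, Finset.mem_range]; exact ⟨g, hg, rfl⟩)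
    (by rw [Fin.lt_def, ofNat_val (by omega), ofNat_val (by omega)]; omega)
    (by rw [Fin.le_def]; simp)
    (by rw [Fin.le_def, ofNat_val (by omega)]; exact h3)
  rwa [ofNat_val (by omega), ofNat_val (by omega)] at this

theorem next_val {n : ℕ} (i : Fin n) :
    ((i : ℕ) + 1 < n ∧ (next i : ℕ) = i + 1) ∨ ((i : ℕ) + 1 = n ∧ (next i : ℕ) = 0) := by
  have := i.2
  unfold next
  by_cases h : (i : ℕ) + 1 < n
  · left; exact ⟨h, by simp [Nat.mod_eq_of_lt h]⟩
  · right
    have : (i : ℕ) + 1 = n := by omega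
    exact ⟨this, by simp [this]⟩

theorem next_inj {n : ℕ} : Function.Injective (next (n := n)) := by
  intro i j h
  have h' : (next i : ℕ) = next j := by rw [h]
  have := next_val i
  have := next_val j
  ext; omega

theorem next_surj {n : ℕ} : Function.Surjective (next (n := n)) :=
  Finite.surjective_of_injective next_inj

theorem next_iter {n : ℕ} (i : Fin n) : next^[n] i = i := by
  have key : ∀ k, ((next^[k] i : Fin n) : ℕ) = (i + k) % n := by
    intro k
    induction k with
    | zero => simp [Nat.mod_eq_of_lt i.2]
    | succ k ih =>
      rw [Function.iterate_succ_apply']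
      unfold next at *
      simp only [ih]
      rw [Nat.mod_add_mod, add_assoc]
  ext
  rw [key n]
  simp [Nat.mod_eq_of_lt i.2]

def rot {n : ℕ} (T : Finset (Edge n)) : Finset (Edge n) := T.image (Sym2.map next)

theorem mem_rot {n : ℕ} {T : Finset (Edge n)} {a b : Fin n} :
    s(next a, next b) ∈ rot T ↔ s(a, b) ∈ T := by
  unfold rot
  rw [show s(next a, next b) = Sym2.map next s(a, b) from rfl]
  exact (Sym2.map.injective next_inj).mem_finset_image

theorem rot_iter {n : ℕ} (T : Finset (Edge n)) : rot^[n] T = T := by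
  have key : ∀ k (T : Finset (Edge n)), rot^[k] T = T.image (Sym2.map (next^[k])) := by
    intro k
    induction k with
    | zero => intro T; simp
    | succ k ih =>
      intro T
      rw [Function.iterate_succ_apply, ih, rot, Finset.image_image, ← Sym2.map_comp]
      rfl
  rw [key]
  have : (next^[n] : Fin n → Fin n) = id := funext next_iter
  rw [this]; simp

theorem cross_of_next {n : ℕ} {e f : Edge n} (h : Cross (Sym2.map next e) (Sym2.map next f)) :
    Cross e f := by
  induction e using Sym2.ind with
  | _ a b =>
  induction f using Sym2.ind with
  | _ c d =>
  obtain ⟨a', b', c', d', e1, e2, h1, h2, h3⟩ := h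
  simp only [Sym2.map_mk] at e1 e2
  rw [Sym2.eq_iff] at e1 e2
  simp only [Fin.lt_def] at h1 h2 h3
  simp only [Fin.ext_iff] at e1 e2
  have na := next_val a
  have nb := next_val b
  have nc := next_val c
  have nd := next_val d
  have build : ∀ p q r t : Fin n, s(a, b) = s(p, q) → s(c, d) = s(r, t) → (p : ℕ) < q →
      (r : ℕ) < t → (((p : ℕ) < r ∧ (r : ℕ) < q ∧ (q : ℕ) < t) ∨
      ((r : ℕ) < p ∧ (p : ℕ) < t ∧ (t : ℕ) < q)) → Cross s(a, b) s(c, d) :=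
    fun p q r t x y z w v => ⟨p, q, r, t, x, y, z, w, v⟩
  rcases Nat.lt_trichotomy (a : ℕ) b with x | x | x
  · rcases Nat.lt_trichotomy (c : ℕ) d with y | y | y
    · exact build a b c d rfl rfl x y (by omega)
    · omega
    · exact build a b d c rfl Sym2.eq_swap x y (by omega)
  · omega
  · rcases Nat.lt_trichotomy (c : ℕ) d with y | y | y
    · exact build b a c d Sym2.eq_swap rfl x y (by omega)
    · omega
    · exact build b a d c Sym2.eq_swap Sym2.eq_swap x y (by omega)

theorem NCST_rot {n : ℕ} {T : Finset (Edge n)} (h : NCST T) : NCST (rot T) := by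
  refine ⟨⟨?_, ?_, ?_⟩, ?_⟩
  · refine h.1.1.map (H := SimpleGraph.fromEdgeSet (rot T : Set (Edge n)))
      ⟨next, ?_⟩ next_surj
    intro a b hab
    rw [SimpleGraph.fromEdgeSet_adj] at hab ⊢
    refine ⟨?_, fun e => hab.2 (next_inj e)⟩
    exact mem_rot.2 hab.1
  · unfold rot
    rw [Finset.card_image_of_injective _ (Sym2.map.injective next_inj)]
    exact h.1.2.1
  · intro e he
    simp only [rot, Finset.mem_image] at he
    obtain ⟨e, he, rfl⟩ := he
    have := h.1.2.2 e he
    rwa [Sym2.isDiag_map next_inj]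
  · intro e he f hf hc
    simp only [rot, Finset.mem_image] at he hf
    obtain ⟨e, he, rfl⟩ := he
    obtain ⟨f, hf, rfl⟩ := hf
    exact h.2 e he f hf (cross_of_next hc)

theorem Flip_rot {n : ℕ} {T U : Finset (Edge n)} (h : Flip T U) : Flip (rot T) (rot U) := by
  obtain ⟨h1, h2, e, he, f, hf, rfl⟩ := h
  have inj := Sym2.map.injective (next_inj (n := n))
  refine ⟨NCST_rot h1, NCST_rot h2, Sym2.map next e, Finset.mem_image_of_mem _ he,
    Sym2.map next f, ?_, ?_⟩
  · unfold rot; rwa [inj.mem_finset_image]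
  · unfold rot
    rw [Finset.image_insert, Finset.image_erase inj]

theorem FlipSeq_rot {n : ℕ} {T U : Finset (Edge n)} {k : ℕ} (h : FlipSeq T U k) :
    FlipSeq (rot T) (rot U) k := by
  obtain ⟨f, f0, fk, hf⟩ := h
  exact ⟨fun i => rot (f i), by simp [f0], by simp [fk], fun i hi => Flip_rot (hf i hi)⟩

theorem FlipSeq_rot_iter {n : ℕ} {T U : Finset (Edge n)} {k : ℕ} (h : FlipSeq T U k) (j : ℕ) :
    FlipSeq (rot^[j] T) (rot^[j] U) k := by
  induction j with
  | zero => exact h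
  | succ j ih =>
    rw [Function.iterate_succ_apply', Function.iterate_succ_apply']
    exact FlipSeq_rot ih

theorem Zig_rot {n : ℕ} {T : Finset (Edge n)} (h : Zig T) : Zig (rot T) := by
  intro u v w x hnd h1 h2 h3
  obtain ⟨u, rfl⟩ := next_surj u
  obtain ⟨v, rfl⟩ := next_surj v
  obtain ⟨w, rfl⟩ := next_surj w
  obtain ⟨x, rfl⟩ := next_surj x
  rw [mem_rot] at h1 h2 h3
  have hnd' : [u, v, w, x].Nodup := by
    have : ([u, v, w, x].map next).Nodup := by simpa using hnd
    exact List.Nodup.of_map _ this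
  have := h u v w x hnd' h1 h2 h3
  have nu := next_val u
  have nv := next_val v
  have nw := next_val w
  have nx := next_val x
  simp only [List.nodup_cons, List.mem_cons, List.not_mem_nil, Fin.ext_iff] at hnd'
  simp only [or_false, not_or] at hnd'
  rw [sep_iff] at *
  omega

theorem main_border {N : ℕ} (hN : 0 < N) : ∀ (j : ℕ) (T₁ T₂ : Finset (Edge (N+1))), NCST T₁ →
    NCST T₂ → Zig T₁ → ∀ i : Fin (N+1), (i : ℕ) + j = N → s(i, next i) ∈ T₁ →
    ∃ k, FlipSeq T₁ T₂ k ∧ 2 * k ≤ 3 * N := by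
  intro j
  induction j with
  | zero =>
    intro T₁ T₂ h₁ h₂ hZ i hi he
    apply main_top h₁ h₂ hZ hN
    have e1 : i = (⟨N, Nat.lt_succ_self N⟩ : Fin (N+1)) := Fin.ext (by simp; omega)
    have e2 : next i = ⟨0, by omega⟩ := by
      have := next_val i
      ext; simp only; omega
    rw [e2, Sym2.eq_swap] at he
    rwa [← e1]
  | succ j ih =>
    intro T₁ T₂ h₁ h₂ hZ i hi he
    have := next_val i
    obtain ⟨k, hk, hb⟩ := ih (rot T₁) (rot T₂) (NCST_rot h₁) (NCST_rot h₂) (Zig_rot hZ) (next i)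
      (by omega) (mem_rot.2 he)
    refine ⟨k, ?_, hb⟩
    have := FlipSeq_rot_iter hk N
    rwa [← Function.iterate_succ_apply, ← Function.iterate_succ_apply, rot_iter, rot_iter] at this

theorem main_all {N : ℕ} {T₁ T₂ : Finset (Edge (N+1))} (h₁ : NCST T₁) (h₂ : NCST T₂)
    (hZ : Zig T₁) : ∃ k, FlipSeq T₁ T₂ k ∧ 2 * k ≤ 3 * N := by
  rcases Nat.eq_zero_or_pos N with rfl | hN
  · have e1 : T₁ = ∅ := Finset.card_eq_zero.1 h₁.1.2.1
    have e2 : T₂ = ∅ := Finset.card_eq_zero.1 h₂.1.2.1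
    refine ⟨0, ?_, by omega⟩
    rw [e1, e2]
    exact ⟨fun _ => ∅, rfl, rfl, fun i hi => absurd hi (by omega)⟩
  · obtain ⟨G, hG, hT⟩ := exists_valid h₁
    obtain ⟨h, hh, he⟩ := exists_short hG _ 0 hN le_rfl
    refine main_border hN (N - h) T₁ T₂ h₁ h₂ hZ ⟨h, by omega⟩ (by simp; omega) ?_
    rw [← hT]
    simp only [tree, Finset.mem_image, Finset.mem_range]
    refine ⟨h, hh, ?_⟩
    rw [he]
    unfold edge
    have a1 : Fin.ofNat (N+1) h = ⟨h, by omega⟩ := Fin.ext (ofNat_val (by omega))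
    have a2 : Fin.ofNat (N+1) (h+1) = next ⟨h, by omega⟩ := by
      have := next_val (⟨h, by omega⟩ : Fin (N+1))
      ext
      rw [ofNat_val (by omega)]
      simp only at this
      omega
    rw [a1, a2]

end NCF

/-- If `T₁` is a nice caterpillar, there is a flip sequence between `T₁` and `T₂`
of length at most `(3/2) n`. -/
theorem nice_caterpillar_flip {n : ℕ} (T₁ T₂ : Finset (Edge n))
    (h₁ : NCST T₁) (h₂ : NCST T₂) (hcat : NiceCaterpillar T₁) :
    ∃ k : ℕ, FlipSeq T₁ T₂ k ∧ (k : ℝ) ≤ 3 * n / 2 := by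
  cases n with
  | zero => exact h₁.1.1.nonempty.elim (fun x => x.elim0)
  | succ N =>
    obtain ⟨k, hk, hb⟩ := NCF.main_all h₁ h₂ (NCF.zig_of_nice hcat)
    refine ⟨k, hk, ?_⟩
    have : (2 * k : ℝ) ≤ 3 * N := by exact_mod_cast hb
    push_cast
    linarith
end

section
/- Let T₁, T₂ be non-crossing spanning trees on n points in convex position such that T₁ contains a subpath with t edges. Then there is a flip sequence between T₁ and T₂ of length at most 2n − t/3. -/
open Finset

namespace SubpathFlip

lemma cross_iff {n : ℕ} (a b c d : Fin n) : Cross s(a, b) s(c, d) ↔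
    ((min (a : ℕ) b < min (c : ℕ) d ∧ min (c : ℕ) d < max (a : ℕ) b ∧
      max (a : ℕ) b < max (c : ℕ) d) ∨
     (min (c : ℕ) d < min (a : ℕ) b ∧ min (a : ℕ) b < max (c : ℕ) d ∧
      max (c : ℕ) d < max (a : ℕ) b)) := by
  constructor
  · rintro ⟨a', b', c', d', h1, h2, h3, h4, h5⟩
    simp only [Fin.lt_def] at h3 h4 h5
    rw [Sym2.eq_iff] at h1 h2
    rcases h1 with ⟨rfl, rfl⟩ | ⟨rfl, rfl⟩ <;> rcases h2 with ⟨rfl, rfl⟩ | ⟨rfl, rfl⟩ <;> omega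
  · intro h
    rcases le_total a b with hab | hab <;> rcases le_total c d with hcd | hcd <;>
      simp only [Fin.le_def] at hab hcd
    · exact ⟨a, b, c, d, rfl, rfl, by simp only [Fin.lt_def]; omega,
        by simp only [Fin.lt_def]; omega, by simp only [Fin.lt_def]; omega⟩
    · exact ⟨a, b, d, c, rfl, Sym2.eq_swap, by simp only [Fin.lt_def]; omega,
        by simp only [Fin.lt_def]; omega, by simp only [Fin.lt_def]; omega⟩
    · exact ⟨b, a, c, d, Sym2.eq_swap, rfl, by simp only [Fin.lt_def]; omega,
        by simp only [Fin.lt_def]; omega, by simp only [Fin.lt_def]; omega⟩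
    · exact ⟨b, a, d, c, Sym2.eq_swap, Sym2.eq_swap, by simp only [Fin.lt_def]; omega,
        by simp only [Fin.lt_def]; omega, by simp only [Fin.lt_def]; omega⟩

lemma cross_symm {n : ℕ} {e f : Edge n} (h : Cross e f) : Cross f e := by
  induction e using Sym2.ind with | _ a b
  induction f using Sym2.ind with | _ c d
  rw [cross_iff] at *
  omega

lemma not_cross_self {n : ℕ} (e : Edge n) : ¬ Cross e e := by
  induction e using Sym2.ind with | _ a b
  rw [cross_iff]
  omega

lemma tree_bridge {n : ℕ} {T : Finset (Edge n)} (hT : IsSpanningTree T) {u v : Fin n}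
    (h : s(u, v) ∈ T) :
    ¬ (SimpleGraph.fromEdgeSet ((T : Set (Edge n)) \ {s(u, v)})).Reachable u v := by
  obtain ⟨hc, hcard, hd⟩ := hT
  have hE : (SimpleGraph.fromEdgeSet (T : Set (Edge n))).edgeSet = (T : Set (Edge n)) := by
    rw [SimpleGraph.edgeSet_fromEdgeSet]
    ext e
    simp only [Set.mem_sdiff, Finset.mem_coe, Sym2.mem_diagSet]
    exact ⟨fun h => h.1, fun h => ⟨h, hd e h⟩⟩
  have ht : (SimpleGraph.fromEdgeSet (T : Set (Edge n))).IsTree := by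
    rw [SimpleGraph.isTree_iff_connected_and_card]
    refine ⟨hc, ?_⟩
    rw [hE]
    have := u.pos
    simp [hcard]
    omega
  have hb := SimpleGraph.isAcyclic_iff_forall_isBridge.1 ht.isAcyclic
    (e := s(u, v)) (by rw [hE]; exact h)
  rw [SimpleGraph.isBridge_iff, SimpleGraph.deleteEdges_fromEdgeSet] at hb
  exact hb

/-- Exchange: a chord of `S` crossing nothing in `T` can be flipped in, removing an edge
outside `S`. -/
lemma exchange {n : ℕ} {T S : Finset (Edge n)} (hT : NCST T) (hS : NCST S) {f : Edge n}
    (hfS : f ∈ S) (hfT : f ∉ T) (hcr : ∀ e ∈ T, ¬ Cross f e) :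
    ∃ e ∈ T, e ∉ S ∧ Flip T (insert f (T.erase e)) := by
  induction f using Sym2.ind with | _ u v
  have huv : v ≠ u := by
    intro h
    exact hS.1.2.2 _ hfS (by simp [h])
  have hbr := tree_bridge hS.1 hfS
  set G := SimpleGraph.fromEdgeSet ((insert s(u, v) T : Finset (Edge n)) : Set (Edge n)) with hG
  have hle : SimpleGraph.fromEdgeSet (T : Set (Edge n)) ≤ G :=
    SimpleGraph.fromEdgeSet_mono (by simp)
  obtain ⟨p, hp⟩ := hT.1.1.exists_isPath u v
  obtain ⟨d, hdp, hd1, hd2⟩ := p.exists_boundary_dart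
    {w | (SimpleGraph.fromEdgeSet ((S : Set (Edge n)) \ {s(u, v)})).Reachable u w}
    (SimpleGraph.Reachable.refl _) hbr
  have hadj := d.adj
  have hdp' : s(d.fst, d.snd) ∈ p.edges := by
    rw [SimpleGraph.Walk.edges, List.mem_map]
    exact ⟨d, hdp, rfl⟩
  obtain ⟨⟨y, z⟩, hyz⟩ := d
  simp only at hadj hd1 hd2 hdp'
  rw [SimpleGraph.fromEdgeSet_adj] at hadj
  obtain ⟨heT, hne⟩ := hadj
  have heT : s(y, z) ∈ T := heT
  have hef : s(y, z) ≠ s(u, v) := fun h => hfT (h ▸ heT)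
  have heS : s(y, z) ∉ S := by
    intro h
    apply hd2
    refine SimpleGraph.Reachable.trans hd1 (SimpleGraph.Adj.reachable ?_)
    rw [SimpleGraph.fromEdgeSet_adj]
    exact ⟨⟨h, hef⟩, hne⟩
  refine ⟨s(y, z), heT, heS, hT, ?_, s(y, z), heT, s(u, v), hfT, rfl⟩
  have hGc : G.Connected := hT.1.1.mono hle
  have hGuv : G.Adj v u := by
    rw [hG, SimpleGraph.fromEdgeSet_adj]
    exact ⟨by simp [Sym2.eq_swap], huv⟩
  have hcyc : (SimpleGraph.Walk.cons hGuv (p.mapLe hle)).IsCycle := by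
    rw [SimpleGraph.Walk.cons_isCycle_iff]
    refine ⟨by simpa using hp, ?_⟩
    intro h
    simp only [SimpleGraph.Walk.edges_mapLe_eq_edges] at h
    have := p.edges_subset_edgeSet h
    rw [SimpleGraph.edgeSet_fromEdgeSet] at this
    apply hfT
    rw [Sym2.eq_swap]
    exact this.1
  have hnb : ¬ G.IsBridge s(y, z) := by
    intro h
    exact h.notMem_edges_of_isCycle hcyc (by simp [hdp'])
  have hcon := hGc.connected_delete_edge_of_not_isBridge hnb
  rw [hG, SimpleGraph.deleteEdges_fromEdgeSet] at hcon
  refine ⟨⟨?_, ?_, ?_⟩, ?_⟩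
  · convert hcon using 2
    ext e
    simp only [Finset.coe_insert, Finset.coe_erase, Set.mem_insert_iff, Set.mem_sdiff,
      Set.mem_singleton_iff]
    constructor
    · rintro (rfl | h)
      · exact ⟨Or.inl rfl, fun h => hef h.symm⟩
      · exact ⟨Or.inr h.1, h.2⟩
    · rintro ⟨h | h, h'⟩
      · exact Or.inl h
      · exact Or.inr ⟨h, h'⟩
  · rw [Finset.card_insert_of_notMem (by simp [hfT]), Finset.card_erase_of_mem heT, ← hT.1.2.1]
    have := Finset.card_pos.2 ⟨_, heT⟩
    omega
  · intro e he
    rcases Finset.mem_insert.1 he with rfl | he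
    · exact hS.1.2.2 _ hfS
    · exact hT.1.2.2 _ (Finset.mem_of_mem_erase he)
  · intro e he e' he'
    rcases Finset.mem_insert.1 he with rfl | he <;>
      rcases Finset.mem_insert.1 he' with rfl | he'
    · exact not_cross_self _
    · exact hcr _ (Finset.mem_of_mem_erase he')
    · exact fun h => hcr _ (Finset.mem_of_mem_erase he) (cross_symm h)
    · exact hT.2 _ (Finset.mem_of_mem_erase he) _ (Finset.mem_of_mem_erase he')

lemma flip_symm {n : ℕ} {T T' : Finset (Edge n)} (h : Flip T T') : Flip T' T := by
  obtain ⟨h1, h2, e, he, f, hf, rfl⟩ := h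
  have hef : e ≠ f := fun h => hf (h ▸ he)
  refine ⟨h2, h1, f, Finset.mem_insert_self _ _, e, by simp [hef], ?_⟩
  rw [Finset.erase_insert (by simp [hf]), Finset.insert_erase he]

lemma flipSeq_cons {n : ℕ} {T T' S : Finset (Edge n)} {k : ℕ} (h : Flip T T')
    (h' : FlipSeq T' S k) : FlipSeq T S (k + 1) := by
  obtain ⟨f, h0, hk, hf⟩ := h'
  refine ⟨fun i => Nat.casesOn i T f, rfl, hk, ?_⟩
  intro i hi
  cases i with
  | zero => simpa [h0] using h
  | succ i => exact hf i (by omega)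

lemma flipSeq_symm {n : ℕ} {T S : Finset (Edge n)} {k : ℕ} (h : FlipSeq T S k) :
    FlipSeq S T k := by
  obtain ⟨f, h0, hk, hf⟩ := h
  refine ⟨fun i => f (k - i), by simpa using hk, by simpa using h0, ?_⟩
  intro i hi
  have := flip_symm (hf (k - (i + 1)) (by omega))
  rwa [show k - (i + 1) + 1 = k - i by omega] at this

lemma flipSeq_trans {n : ℕ} {T S U : Finset (Edge n)} {k l : ℕ} (h : FlipSeq T S k)
    (h' : FlipSeq S U l) : FlipSeq T U (k + l) := by
  induction k generalizing T with
  | zero =>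
    obtain ⟨f, h0, hk, hf⟩ := h
    obtain rfl : T = S := h0.symm.trans hk
    simpa using h'
  | succ k ih =>
    obtain ⟨f, h0, hk, hf⟩ := h
    rw [show k + 1 + l = (k + l) + 1 by omega]
    refine flipSeq_cons (T' := f 1) ?_ (ih ⟨fun i => f (i + 1), rfl, hk, ?_⟩)
    · rw [← h0]; exact hf 0 (by omega)
    · intro i hi
      exact hf (i + 1) (by omega)

/-- `S` is good when every other tree misses an edge of `S` that could be added freely. -/
def Good {n : ℕ} (S : Finset (Edge n)) : Prop :=
  ∀ T, NCST T → ¬ S ⊆ T → ∃ f ∈ S, f ∉ T ∧ ∀ e ∈ T, ¬ Cross f e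

lemma good_dist {n : ℕ} {S : Finset (Edge n)} (hS : NCST S) (hg : Good S) :
    ∀ (k : ℕ) (T : Finset (Edge n)), NCST T → (S \ T).card = k → FlipSeq T S k := by
  intro k
  induction k with
  | zero =>
    intro T hT hk
    have hsub : S ⊆ T := by
      rw [Finset.card_eq_zero, Finset.sdiff_eq_empty_iff_subset] at hk
      exact hk
    have : S = T := Finset.eq_of_subset_of_card_le hsub (by rw [hT.1.2.1, hS.1.2.1])
    exact ⟨fun _ => T, rfl, this.symm, fun i hi => by omega⟩
  | succ k ih =>
    intro T hT hk
    have hns : ¬ S ⊆ T := by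
      intro h
      rw [Finset.sdiff_eq_empty_iff_subset.2 h] at hk
      simp at hk
    obtain ⟨f, hfS, hfT, hcr⟩ := hg T hT hns
    obtain ⟨e, heT, heS, hfl⟩ := exchange hT hS hfS hfT hcr
    refine flipSeq_cons hfl (ih _ hfl.2.1 ?_)
    have : S \ insert f (T.erase e) = (S \ T).erase f := by
      ext a
      simp only [Finset.mem_sdiff, Finset.mem_insert, Finset.mem_erase, not_or, not_and]
      constructor
      · rintro ⟨h1, h2, h3⟩
        exact ⟨h2, h1, h3 (fun h => heS (h ▸ h1))⟩
      · rintro ⟨h1, h2, h3⟩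
        exact ⟨h2, h1, fun _ => h3⟩
    rw [this, Finset.card_erase_of_mem (by simp [hfS, hfT]), hk]
    rfl

lemma via_good {n : ℕ} {S T₁ T₂ : Finset (Edge n)} (hS : NCST S) (hg : Good S)
    (h₁ : NCST T₁) (h₂ : NCST T₂) :
    ∃ k, FlipSeq T₁ T₂ k ∧ k + (S ∩ T₁).card ≤ 2 * n := by
  refine ⟨_, flipSeq_trans (good_dist hS hg _ T₁ h₁ rfl)
    (flipSeq_symm (good_dist hS hg _ T₂ h₂ rfl)), ?_⟩
  have h1 := Finset.card_sdiff_add_card_inter S T₁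
  have h2 := Finset.card_le_card (Finset.sdiff_subset : S \ T₂ ⊆ S)
  have := hS.1.2.1
  omega

/-- Parent function of the caterpillar. -/
def par {n : ℕ} (p : Fin n) (g : Fin n → Fin n) (i : Fin n) : Fin n :=
  if i ≤ p then ⟨(i : ℕ) - 1, by omega⟩ else g i

/-- The caterpillar: border path on `[0,p]`, and `b` joined to `g b` for `b > p`. -/
def cat {n : ℕ} (p : Fin n) (g : Fin n → Fin n) : Finset (Edge n) :=
  (Finset.univ.filter (fun i : Fin n => 0 < (i : ℕ))).image (fun i => s(par p g i, i))

lemma cat_border {n : ℕ} {p : Fin n} {g : Fin n → Fin n} {i j : Fin n}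
    (hij : (j : ℕ) = i + 1) (hj : j ≤ p) : s(i, j) ∈ cat p g := by
  rw [cat, Finset.mem_image]
  refine ⟨j, by simp; omega, ?_⟩
  have : par p g j = i := by
    rw [par, if_pos hj]
    ext
    simp
    omega
  rw [this]

lemma cat_leg {n : ℕ} {p : Fin n} {g : Fin n → Fin n} {b : Fin n}
    (hb : p < b) : s(g b, b) ∈ cat p g := by
  rw [cat, Finset.mem_image]
  refine ⟨b, by rw [Fin.lt_def] at hb; simp; omega, ?_⟩
  rw [par, if_neg (not_le.2 hb)]

lemma cat_cases {n : ℕ} {p : Fin n} {g : Fin n → Fin n} {e : Edge n} (he : e ∈ cat p g) :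
    (∃ i j : Fin n, (j : ℕ) = i + 1 ∧ j ≤ p ∧ e = s(i, j)) ∨ ∃ b, p < b ∧ e = s(g b, b) := by
  rw [cat, Finset.mem_image] at he
  obtain ⟨i, hi, rfl⟩ := he
  have hi' : 0 < (i : ℕ) := by simpa using hi
  by_cases h : i ≤ p
  · left
    refine ⟨par p g i, i, ?_, h, rfl⟩
    rw [par, if_pos h]
    simp
    omega
  · right
    refine ⟨i, not_le.1 h, ?_⟩
    rw [par, if_neg h]

lemma par_lt {n : ℕ} {p : Fin n} {g : Fin n → Fin n} (hg : ∀ b, p < b → g b ≤ p) {i : Fin n}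
    (hi : 0 < (i : ℕ)) : (par p g i : ℕ) < i := by
  unfold par
  split_ifs with h
  · simp; omega
  · have := hg i (not_le.1 h)
    simp only [Fin.le_def] at *
    omega

lemma cat_ncst {n : ℕ} {p : Fin n} {g : Fin n → Fin n} (hg : ∀ b, p < b → g b ≤ p)
    (ha : ∀ b c, p < b → b ≤ c → g c ≤ g b) : NCST (cat p g) := by
  have hn := p.pos
  refine ⟨⟨?_, ?_, ?_⟩, ?_⟩
  · rw [SimpleGraph.connected_iff_exists_forall_reachable]
    refine ⟨⟨0, hn⟩, ?_⟩
    have key : ∀ (k : ℕ) (w : Fin n), (w : ℕ) = k →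
        (SimpleGraph.fromEdgeSet (cat p g : Set (Edge n))).Reachable ⟨0, hn⟩ w := by
      intro k
      induction k using Nat.strong_induction_on with
      | _ k ih =>
        intro w hw
        by_cases h0 : (w : ℕ) = 0
        · have : w = ⟨0, hn⟩ := Fin.ext h0
          rw [this]
        · have hlt := par_lt hg (i := w) (by omega)
          refine (ih _ (by omega) (par p g w) rfl).trans (SimpleGraph.Adj.reachable ?_)
          rw [SimpleGraph.fromEdgeSet_adj]
          refine ⟨?_, fun h => by rw [h] at hlt; omega⟩
          rw [Finset.mem_coe, cat, Finset.mem_image]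
          exact ⟨w, by simp; omega, rfl⟩
    exact fun w => key _ w rfl
  · rw [cat, Finset.card_image_of_injOn]
    · have : (Finset.univ.filter (fun i : Fin n => 0 < (i : ℕ))) =
          Finset.univ.erase (⟨0, hn⟩ : Fin n) := by
        ext i
        simp [Fin.ext_iff]
        omega
      rw [this, Finset.card_erase_of_mem (Finset.mem_univ _)]
      simp
    · intro i hi j hj hij
      have hi' := par_lt hg (i := i) (by simpa using hi)
      have hj' := par_lt hg (i := j) (by simpa using hj)
      simp only [Sym2.eq_iff] at hij
      rcases hij with h | ⟨h1, h2⟩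
      · exact h.2
      · rw [h1] at hi'
        rw [← h2] at hj'
        omega
  · intro e he
    rw [cat, Finset.mem_image] at he
    obtain ⟨i, hi, rfl⟩ := he
    have := par_lt hg (i := i) (by simpa using hi)
    simp only [Sym2.mk_isDiag_iff]
    intro h
    rw [h] at this
    omega
  · intro e he f hf
    rcases cat_cases he with ⟨i, j, hij, hj, rfl⟩ | ⟨b, hb, rfl⟩ <;>
      rcases cat_cases hf with ⟨i', j', hij', hj', rfl⟩ | ⟨b', hb', rfl⟩ <;>
      rw [cross_iff]
    · omega
    · omega
    · omega
    · have h1 := hg b hb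
      have h2 := hg b' hb'
      rcases le_total b b' with h | h
      · have := ha b b' hb h
        simp only [Fin.le_def, Fin.lt_def] at *
        omega
      · have := ha b' b hb' h
        simp only [Fin.le_def, Fin.lt_def] at *
        omega

/-- If the border path on `[0,p]` avoids `e`, all of `[0,p]` is connected in `T - e`. -/
lemma reach_spine {n : ℕ} {p : Fin n} {E : Set (Edge n)}
    (h : ∀ i j : Fin n, (j : ℕ) = i + 1 → j ≤ p → s(i, j) ∈ E) {a b : Fin n}
    (ha : a ≤ p) (hb : b ≤ p) : (SimpleGraph.fromEdgeSet E).Reachable a b := by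
  have hn := p.pos
  have key : ∀ (k : ℕ) (hk : k < n), k ≤ (p : ℕ) →
      (SimpleGraph.fromEdgeSet E).Reachable ⟨0, hn⟩ ⟨k, hk⟩ := by
    intro k
    induction k with
    | zero => intro _ _; exact SimpleGraph.Reachable.refl _
    | succ k ih =>
      intro hk hkp
      refine (ih (by omega) (by omega)).trans (SimpleGraph.Adj.reachable ?_)
      rw [SimpleGraph.fromEdgeSet_adj]
      exact ⟨h _ _ rfl hkp, by simp⟩
  exact (key a a.2 ha).symm.trans (key b b.2 hb)

lemma cat_good {n : ℕ} {p : Fin n} {g : Fin n → Fin n} (hg : ∀ b, p < b → g b ≤ p)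
    (ha : ∀ b c, p < b → b ≤ c → g c ≤ g b) : Good (cat p g) := by
  intro T hT hns
  by_contra hcon
  push Not at hcon
  -- the spine lies in `T`
  have hsp : ∀ i j : Fin n, (j : ℕ) = i + 1 → j ≤ p → s(i, j) ∈ T := by
    intro i j hij hj
    by_contra hnot
    obtain ⟨e, he, hcr⟩ := hcon _ (cat_border hij hj) hnot
    induction e using Sym2.ind with | _ c d
    rw [cross_iff] at hcr
    omega
  have hX : ∀ f ∈ T, ∀ e ∈ T, ¬ Cross f e := fun f hf e he => hT.2 f hf e he
  -- no long chords inside the spine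
  have hAA : ∀ c d : Fin n, s(c, d) ∈ T → (c : ℕ) + 1 < d → d ≤ p → False := by
    intro c d hcd h1 h2
    refine tree_bridge hT.1 hcd (reach_spine (p := p) ?_ ?_ h2)
    · intro i j hij hj
      refine ⟨hsp i j hij hj, ?_⟩
      simp only [Set.mem_singleton_iff, Sym2.eq_iff, Fin.ext_iff]
      omega
    · simp only [Fin.le_def] at *
      omega
  -- only one edge to the spine per leg vertex
  have hAB : ∀ c c' d : Fin n, s(c, d) ∈ T → s(c', d) ∈ T → c ≤ p → c' ≤ p → p < d → c = c' := by
    intro c c' d h1 h2 hc hc' hd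
    by_contra hne
    refine tree_bridge hT.1 h1 ((reach_spine (p := p) ?_ hc hc').trans
      (SimpleGraph.Adj.reachable ?_))
    · intro i j hij hj
      refine ⟨hsp i j hij hj, ?_⟩
      simp only [Set.mem_singleton_iff, Sym2.eq_iff, Fin.ext_iff, Fin.le_def, Fin.lt_def] at *
      omega
    · rw [SimpleGraph.fromEdgeSet_adj]
      refine ⟨⟨h2, ?_⟩, ?_⟩
      · simp only [Set.mem_singleton_iff, Sym2.eq_iff, Fin.ext_iff, Fin.le_def, Fin.lt_def] at *
        omega
      · simp only [ne_eq, Fin.ext_iff, Fin.le_def, Fin.lt_def] at *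
        omega
  -- visible vertices
  let vis : Fin n → Prop := fun b => ∀ c d : Fin n, s(c, d) ∈ T → p < c → ¬ (c < b ∧ b < d)
  have hvisAB : ∀ c d : Fin n, s(c, d) ∈ T → c ≤ p → p < d → vis d := by
    intro c d hcd hc hd c' d' hcd' hc' hbad
    apply hX _ hcd _ hcd'
    rw [cross_iff]
    simp only [Fin.le_def, Fin.lt_def] at *
    omega
  -- a blocked visible vertex is blocked by a leg, from one of two directions
  have hblock : ∀ b, p < b → vis b → s(g b, b) ∉ T →
      ∃ c d : Fin n, s(c, d) ∈ T ∧ c ≤ p ∧ p < d ∧ ((g b < c ∧ b < d) ∨ (c < g b ∧ d < b)) := by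
    intro b hb hv hnot
    obtain ⟨e, he, hcr⟩ := hcon _ (cat_leg hb) hnot
    have main : ∀ c d : Fin n, s(c, d) ∈ T → c ≤ d → Cross s(g b, b) s(c, d) →
      ∃ c d : Fin n, s(c, d) ∈ T ∧ c ≤ p ∧ p < d ∧
        ((g b < c ∧ b < d) ∨ (c < g b ∧ d < b)) := by
      intro c d hcd hle hcr
      have h1 := hv c d hcd
      have h2 := hAA c d hcd
      have h3 := hg b hb
      rw [cross_iff] at hcr
      refine ⟨c, d, hcd, ?_⟩
      simp only [Fin.le_def, Fin.lt_def] at *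
      by_cases hdp : (d : ℕ) ≤ p
      · exact (h2 (by omega) hdp).elim
      · by_cases hcp : (c : ℕ) ≤ p
        · omega
        · have := h1 (by omega)
          omega
    induction e using Sym2.ind with | _ c d
    rcases le_total c d with h | h
    · exact main c d he h hcr
    · rw [Sym2.eq_swap] at he
      refine main d c he h ?_
      rwa [Sym2.eq_swap (a := d) (b := c)]
  -- direction right impossible
  have hR : ∀ (k : ℕ) (b c d : Fin n), n - (b : ℕ) = k → p < b → s(c, d) ∈ T → c ≤ p → p < d →
      g b < c → b < d → False := by
    intro k
    induction k using Nat.strong_induction_on with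
    | _ k ih =>
      intro b c d hk hb hcd hc hd hgb hbd
      have hgd := ha b d hb hbd.le
      have hgd' := hg d hd
      have hnot : s(g d, d) ∉ T := by
        intro h
        have := hAB _ _ _ h hcd hgd' hc hd
        simp only [Fin.le_def, Fin.lt_def, Fin.ext_iff] at *
        omega
      obtain ⟨c', d', hcd', hc', hd', hh | hh⟩ := hblock d hd (hvisAB c d hcd hc hd) hnot
      · exact ih (n - (d : ℕ)) (by simp only [Fin.lt_def] at *; omega) d c' d' rfl hd hcd' hc' hd'
          hh.1 hh.2
      · apply hX _ hcd _ hcd'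
        rw [cross_iff]
        simp only [Fin.le_def, Fin.lt_def] at *
        omega
  have hL : ∀ (k : ℕ) (b c d : Fin n), (b : ℕ) = k → p < b → s(c, d) ∈ T → c ≤ p → p < d →
      c < g b → d < b → False := by
    intro k
    induction k using Nat.strong_induction_on with
    | _ k ih =>
      intro b c d hk hb hcd hc hd hgb hbd
      have hgd := ha d b hd hbd.le
      have hgd' := hg d hd
      have hnot : s(g d, d) ∉ T := by
        intro h
        have := hAB _ _ _ h hcd hgd' hc hd
        simp only [Fin.le_def, Fin.lt_def, Fin.ext_iff] at *
        omega
      obtain ⟨c', d', hcd', hc', hd', hh | hh⟩ := hblock d hd (hvisAB c d hcd hc hd) hnot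
      · apply hX _ hcd _ hcd'
        rw [cross_iff]
        simp only [Fin.le_def, Fin.lt_def] at *
        omega
      · exact ih (d : ℕ) (by simp only [Fin.lt_def] at *; omega) d c' d' rfl hd hcd' hc' hd'
          hh.1 hh.2
  have hvis : ∀ b, p < b → vis b → s(g b, b) ∈ T := by
    intro b hb hv
    by_contra hnot
    obtain ⟨c, d, hcd, hc, hd, hh | hh⟩ := hblock b hb hv hnot
    · exact hR _ b c d rfl hb hcd hc hd hh.1 hh.2
    · exact hL _ b c d rfl hb hcd hc hd hh.1 hh.2
  -- no chord outside the spine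
  have hBB : ∀ (k : ℕ) (c d : Fin n), n - ((d : ℕ) - c) = k → s(c, d) ∈ T → p < c → c < d →
      False := by
    intro k
    induction k using Nat.strong_induction_on with
    | _ k ih =>
      intro c d hk hcd hc hlt
      have hd : p < d := hc.trans hlt
      have hvc : vis c := by
        intro c' d' h' hc' hbad
        refine ih (n - ((d' : ℕ) - c')) ?_ c' d' rfl h' hc' (hbad.1.trans hbad.2)
        have := hX _ hcd _ h'
        rw [cross_iff] at this
        have := d'.2
        simp only [Fin.lt_def] at *
        omega
      have hvd : vis d := by
        intro c' d' h' hc' hbad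
        refine ih (n - ((d' : ℕ) - c')) ?_ c' d' rfl h' hc' (hbad.1.trans hbad.2)
        have := hX _ hcd _ h'
        rw [cross_iff] at this
        have := d'.2
        simp only [Fin.lt_def] at *
        omega
      have h1 := hvis c hc hvc
      have h2 := hvis d hd hvd
      have hgc := hg c hc
      have hgd := hg d hd
      refine tree_bridge hT.1 hcd (((SimpleGraph.Adj.reachable ?_).trans
        (reach_spine (p := p) ?_ hgc hgd)).trans (SimpleGraph.Adj.reachable ?_))
      · rw [SimpleGraph.fromEdgeSet_adj]
        refine ⟨⟨by rw [Sym2.eq_swap]; exact h1, ?_⟩, ?_⟩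
        · simp only [Set.mem_singleton_iff, Sym2.eq_iff, Fin.ext_iff, Fin.le_def, Fin.lt_def] at *
          omega
        · simp only [ne_eq, Fin.ext_iff, Fin.le_def, Fin.lt_def] at *
          omega
      · intro i j hij hj
        refine ⟨hsp i j hij hj, ?_⟩
        simp only [Set.mem_singleton_iff, Sym2.eq_iff, Fin.ext_iff, Fin.le_def, Fin.lt_def] at *
        omega
      · rw [SimpleGraph.fromEdgeSet_adj]
        refine ⟨⟨h2, ?_⟩, ?_⟩
        · simp only [Set.mem_singleton_iff, Sym2.eq_iff, Fin.ext_iff, Fin.le_def, Fin.lt_def] at *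
          omega
        · simp only [ne_eq, Fin.ext_iff, Fin.le_def, Fin.lt_def] at *
          omega
  apply hns
  intro e he
  rcases cat_cases he with ⟨i, j, hij, hj, rfl⟩ | ⟨b, hb, rfl⟩
  · exact hsp i j hij hj
  · exact hvis b hb (fun c d hcd hc hbad => hBB _ c d rfl hcd hc (hbad.1.trans hbad.2))

/-- Every chord of a tree has a border edge in its pocket. -/
lemma pocket {n : ℕ} {T : Finset (Edge n)} (hT : NCST T) :
    ∀ (k : ℕ) (a b : Fin n), (b : ℕ) - a = k → a < b → s(a, b) ∈ T →
      ∃ i j : Fin n, (j : ℕ) = i + 1 ∧ a ≤ i ∧ j ≤ b ∧ s(i, j) ∈ T := by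
  intro k
  induction k using Nat.strong_induction_on with
  | _ k ih =>
    intro a b hk hab hT'
    by_cases h1 : (b : ℕ) = a + 1
    · exact ⟨a, b, h1, le_rfl, le_rfl, hT'⟩
    · have hlt : (a : ℕ) + 1 < b := by
        rw [Fin.lt_def] at hab
        omega
      let c : Fin n := ⟨a + 1, by omega⟩
      have hca : c ≠ a := by simp [c, Fin.ext_iff]
      have : Nontrivial (Fin n) := ⟨c, a, hca⟩
      obtain ⟨d, hd⟩ := hT.1.1.preconnected.exists_adj_of_nontrivial c
      rw [SimpleGraph.fromEdgeSet_adj] at hd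
      obtain ⟨hcd, hne⟩ := hd
      have hcd : s(c, d) ∈ T := hcd
      have hx := hT.2 _ hT' _ hcd
      rw [cross_iff] at hx
      have hcv : (c : ℕ) = a + 1 := rfl
      simp only [ne_eq, Fin.ext_iff, Fin.lt_def] at hne hab
      rcases lt_or_ge (c : ℕ) d with h | h
      · obtain ⟨i, j, h2, h3, h4, h5⟩ := ih ((d : ℕ) - c) (by omega) c d rfl h hcd
        refine ⟨i, j, h2, ?_, ?_, h5⟩ <;> simp only [Fin.le_def] at * <;> omega
      · rw [Sym2.eq_swap] at hcd
        obtain ⟨i, j, h2, h3, h4, h5⟩ := ih ((c : ℕ) - d) (by omega) d c rfl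
          (by rw [Fin.lt_def]; omega) hcd
        refine ⟨i, j, h2, ?_, ?_, h5⟩ <;> simp only [Fin.le_def] at * <;> omega

/-- A path edge whose open span contains neither end of the path contains no path vertex. -/
lemma path_out {n t : ℕ} {T : Finset (Edge n)} (hT : NCST T)
    (x : Fin (t + 1) → Fin n) (hinj : Function.Injective x)
    (hpath : ∀ i : Fin t, s(x i.castSucc, x i.succ) ∈ T) (i : Fin t)
    (h0 : ¬ (min (x i.castSucc : ℕ) (x i.succ) < x 0 ∧
      (x 0 : ℕ) < max (x i.castSucc : ℕ) (x i.succ)))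
    (h1 : ¬ (min (x i.castSucc : ℕ) (x i.succ) < x (Fin.last t) ∧
      (x (Fin.last t) : ℕ) < max (x i.castSucc : ℕ) (x i.succ))) (j : Fin (t + 1)) :
    ¬ (min (x i.castSucc : ℕ) (x i.succ) < x j ∧
      (x j : ℕ) < max (x i.castSucc : ℕ) (x i.succ)) := by
  have hne : ∀ j k : Fin (t + 1), (j : ℕ) ≠ k → (x j : ℕ) ≠ x k := by
    intro j k hjk h
    exact hjk (congrArg Fin.val (hinj (Fin.ext h)))
  have hstep : ∀ k (hk : k < t), ¬ Cross s(x i.castSucc, x i.succ)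
      s(x ⟨k, by omega⟩, x ⟨k + 1, by omega⟩) := by
    intro k hk
    exact hT.2 _ (hpath i) _ (hpath ⟨k, hk⟩)
  have fwd : ∀ k (hk : k < t + 1), k ≤ (i : ℕ) → ¬ (min (x i.castSucc : ℕ) (x i.succ) < x ⟨k, hk⟩ ∧
      (x ⟨k, hk⟩ : ℕ) < max (x i.castSucc : ℕ) (x i.succ)) := by
    intro k
    induction k with
    | zero => intro _ _; exact h0
    | succ k ih =>
      intro hk hki
      have h2 := ih (by omega) (by omega)
      have h3 := hstep k (by omega)
      have h4 := hne ⟨k, by omega⟩ i.castSucc (by simp; omega)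
      have h5 := hne ⟨k, by omega⟩ i.succ (by simp; omega)
      rw [cross_iff] at h3
      omega
  have bwd : ∀ m k (hk : k < t + 1), k + m = t → (i : ℕ) + 1 ≤ k →
      ¬ (min (x i.castSucc : ℕ) (x i.succ) < x ⟨k, hk⟩ ∧
      (x ⟨k, hk⟩ : ℕ) < max (x i.castSucc : ℕ) (x i.succ)) := by
    intro m
    induction m with
    | zero =>
      intro k hk hkt _
      have : (⟨k, hk⟩ : Fin (t + 1)) = Fin.last t := Fin.ext (by simpa using hkt)
      rw [this]
      exact h1
    | succ m ih =>
      intro k hk hkt hki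
      have h2 := ih (k + 1) (by omega) (by omega) (by omega)
      have h3 := hstep k (by omega)
      have h4 := hne ⟨k + 1, by omega⟩ i.castSucc (by simp; omega)
      have h5 := hne ⟨k + 1, by omega⟩ i.succ (by simp; omega)
      rw [cross_iff] at h3
      omega
  by_cases h : (j : ℕ) ≤ i
  · exact fwd j j.2 h
  · exact bwd (t - j) j j.2 (by omega) (by omega)

lemma main0 {n t : ℕ} (T₁ T₂ : Finset (Edge n))
    (h₁ : NCST T₁) (h₂ : NCST T₂)
    (x : Fin (t + 1) → Fin n) (hinj : Function.Injective x)
    (hpath : ∀ i : Fin t, s(x i.castSucc, x i.succ) ∈ T₁) (hx0 : (x 0 : ℕ) = 0) :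
    ∃ k : ℕ, FlipSeq T₁ T₂ k ∧ 3 * k + t ≤ 6 * n := by
  classical
  have hn := (x 0).pos
  set p := x (Fin.last t) with hp
  let lo : Fin t → Fin n := fun i => min (x i.castSucc) (x i.succ)
  let hi : Fin t → Fin n := fun i => max (x i.castSucc) (x i.succ)
  have hlo : ∀ i, (lo i : ℕ) = min (x i.castSucc : ℕ) (x i.succ) := by
    intro i
    simp only [lo]
    rcases le_total (x i.castSucc) (x i.succ) with h | h
    · rw [min_eq_left h, min_eq_left (Fin.le_def.1 h)]
    · rw [min_eq_right h, min_eq_right (Fin.le_def.1 h)]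
  have hhi : ∀ i, (hi i : ℕ) = max (x i.castSucc : ℕ) (x i.succ) := by
    intro i
    simp only [hi]
    rcases le_total (x i.castSucc) (x i.succ) with h | h
    · rw [max_eq_right h, max_eq_right (Fin.le_def.1 h)]
    · rw [max_eq_left h, max_eq_left (Fin.le_def.1 h)]
  have hlohi : ∀ i, s(lo i, hi i) ∈ T₁ := by
    intro i
    have := hpath i
    simp only [lo, hi]
    rcases le_total (x i.castSucc) (x i.succ) with h | h
    · rwa [min_eq_left h, max_eq_right h]
    · rwa [min_eq_right h, max_eq_left h, Sym2.eq_swap]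
  have hlt : ∀ i, (lo i : ℕ) < hi i := by
    intro i
    have : (x i.castSucc : ℕ) ≠ x i.succ := by
      intro h
      have := congrArg Fin.val (hinj (Fin.ext h))
      simp at this
    rw [hlo, hhi]
    omega
  let Acr : Finset (Fin t) := Finset.univ.filter (fun i => lo i ≤ p ∧ p < hi i)
  let Win : Finset (Fin t) := Finset.univ.filter (fun i => ¬ (lo i ≤ p ∧ p < hi i))
  have hsum : Acr.card + Win.card = t := by
    have := Finset.card_filter_add_card_filter_not (s := (Finset.univ : Finset (Fin t)))
      (fun i => lo i ≤ p ∧ p < hi i)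
    rw [Finset.card_univ, Fintype.card_fin] at this
    exact this
  -- within edges
  have hwin : ∃ k, FlipSeq T₁ T₂ k ∧ k + Win.card ≤ 2 * n := by
    let q : Fin n := ⟨n - 1, by omega⟩
    have hq : ∀ b : Fin n, b ≤ q := by
      intro b
      rw [Fin.le_def]
      have : (q : ℕ) = n - 1 := rfl
      omega
    have hg : ∀ b, q < b → (id : Fin n → Fin n) b ≤ q := fun b _ => hq b
    have ha : ∀ b c, q < b → b ≤ c → (id : Fin n → Fin n) c ≤ id b :=
      fun b c hb _ => absurd (hq b) (not_le.2 hb)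
    obtain ⟨k, hk, hk'⟩ := via_good (cat_ncst hg ha) (cat_good hg ha) h₁ h₂
    refine ⟨k, hk, ?_⟩
    suffices Win.card ≤ (cat q id ∩ T₁).card by omega
    have hpk := fun i => pocket h₁ _ (lo i) (hi i) rfl (hlt i) (hlohi i)
    choose u v huv hu hv huvT using hpk
    apply Finset.card_le_card_of_injOn (fun i => s(u i, v i))
    · intro i _
      simp only [Finset.coe_inter, Set.mem_inter_iff, Finset.mem_coe]
      exact ⟨cat_border (huv i) (hq _), huvT i⟩
    · intro i hiW j hjW hij
      have hout : ∀ i ∈ Win, ∀ j, ¬ ((lo i : ℕ) < x j ∧ (x j : ℕ) < hi i) := by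
        intro i hiW j
        have hw : ¬ (lo i ≤ p ∧ p < hi i) := by simpa [Win] using hiW
        have := path_out h₁ x hinj hpath i (by omega)
          (by
            rw [← hlo, ← hhi]
            simp only [Fin.le_def, Fin.lt_def] at hw
            omega) j
        rw [← hlo, ← hhi] at this
        exact this
      have a1 := hout i hiW j.castSucc
      have a2 := hout i hiW j.succ
      have b1 := hout j hjW i.castSucc
      have b2 := hout j hjW i.succ
      have c1 := hlo i
      have c2 := hhi i
      have d1 := hlo j
      have d2 := hhi j
      have e1 := huv i
      have e2 := huv j
      have f1 := hu i
      have f2 := hu j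
      have g1 := hv i
      have g2 := hv j
      have l1 := hlt i
      have l2 := hlt j
      simp only [Sym2.eq_iff, Fin.ext_iff] at hij
      simp only [Fin.le_def] at f1 f2 g1 g2
      have hlo_eq : (lo i : ℕ) = lo j := by omega
      have hhi_eq : (hi i : ℕ) = hi j := by omega
      by_contra hne
      have hne' : (i : ℕ) ≠ j := fun h => hne (Fin.ext h)
      have n1 : (x i.castSucc : ℕ) ≠ x j.castSucc := by
        intro h
        have := congrArg Fin.val (hinj (Fin.ext h))
        simp at this
        omega
      have n2 : (x i.castSucc : ℕ) = x j.succ := by omega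
      have n3 : (x i.succ : ℕ) = x j.castSucc := by omega
      have n2' := congrArg Fin.val (hinj (Fin.ext n2))
      have n3' := congrArg Fin.val (hinj (Fin.ext n3))
      simp at n2' n3'
      omega
  -- across edges
  have hacr : ∃ k, FlipSeq T₁ T₂ k ∧ 2 * k + Acr.card ≤ 4 * n := by
    let M : Fin n → Finset (Fin n) := fun b => insert p
      (Finset.univ.filter (fun a => a ≤ p ∧ ∃ b', p < b' ∧ b' ≤ b ∧ s(a, b') ∈ T₁))
    have hM : ∀ b, (M b).Nonempty := fun b => ⟨p, Finset.mem_insert_self _ _⟩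
    let g : Fin n → Fin n := fun b => (M b).min' (hM b)
    have hg : ∀ b, p < b → g b ≤ p := fun b _ => Finset.min'_le _ _ (Finset.mem_insert_self _ _)
    have ha : ∀ b c, p < b → b ≤ c → g c ≤ g b := by
      intro b c hb hbc
      apply Finset.min'_subset
      intro a ha
      simp only [M, Finset.mem_insert, Finset.mem_filter, Finset.mem_univ, true_and] at ha ⊢
      rcases ha with h | ⟨h, b', h1, h2, h3⟩
      · exact Or.inl h
      · exact Or.inr ⟨h, b', h1, h2.trans hbc, h3⟩
    obtain ⟨k, hk, hk'⟩ := via_good (cat_ncst hg ha) (cat_good hg ha) h₁ h₂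
    refine ⟨k, hk, ?_⟩
    let W : Finset (Fin n) := Finset.univ.filter (fun b => p < b ∧ s(g b, b) ∈ T₁)
    have hW : W.card ≤ (cat p g ∩ T₁).card := by
      apply Finset.card_le_card_of_injOn (fun b => s(g b, b))
      · intro b hb
        have hb' : p < b ∧ s(g b, b) ∈ T₁ := by simpa [W] using hb
        simp only [Finset.coe_inter, Set.mem_inter_iff, Finset.mem_coe]
        exact ⟨cat_leg hb'.1, hb'.2⟩
      · intro b hb c hc hbc
        have hb' : p < b ∧ s(g b, b) ∈ T₁ := by simpa [W] using hb
        have hc' : p < c ∧ s(g c, c) ∈ T₁ := by simpa [W] using hc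
        have h1 := hg b hb'.1
        have h2 := hg c hc'.1
        have h3 := hb'.1
        have h4 := hc'.1
        simp only [Sym2.eq_iff, Fin.ext_iff, Fin.le_def, Fin.lt_def] at *
        omega
    have hAW : Acr.card ≤ 2 * W.card := by
      apply Finset.card_le_mul_card_image_of_maps_to (f := hi)
      · intro i hiA
        have hiA' : lo i ≤ p ∧ p < hi i := by simpa [Acr] using hiA
        have hmem : s(g (hi i), hi i) ∈ T₁ := by
          have hloM : lo i ∈ M (hi i) := by
            simp only [M, Finset.mem_insert, Finset.mem_filter, Finset.mem_univ, true_and]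
            exact Or.inr ⟨hiA'.1, hi i, hiA'.2, le_rfl, hlohi i⟩
          have hle : g (hi i) ≤ lo i := Finset.min'_le _ _ hloM
          have hgM : g (hi i) ∈ M (hi i) := Finset.min'_mem _ _
          generalize g (hi i) = a at hle hgM
          simp only [M, Finset.mem_insert, Finset.mem_filter, Finset.mem_univ, true_and] at hgM
          rcases hgM with rfl | ⟨h, b', k1, k2, k3⟩
          · rw [le_antisymm hle hiA'.1]
            exact hlohi i
          · by_cases hb : b' = hi i
            · rw [← hb]
              exact k3
            · have hcr := h₁.2 _ k3 _ (hlohi i)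
              rw [cross_iff] at hcr
              have heq : a = lo i := by
                simp only [Fin.le_def, Fin.lt_def, Fin.ext_iff] at *
                omega
              rw [heq]
              exact hlohi i
        simp only [W, Finset.mem_filter, Finset.mem_univ, true_and]
        exact ⟨hiA'.2, hmem⟩
      · intro b _
        have hsub : (Acr.filter (fun i => hi i = b)) ⊆
            (Finset.univ.filter (fun i : Fin t => x i.castSucc = b)) ∪
            (Finset.univ.filter (fun i : Fin t => x i.succ = b)) := by
          intro i hi'
          have hib : hi i = b := (Finset.mem_filter.1 hi').2
          simp only [Finset.mem_union, Finset.mem_filter, Finset.mem_univ, true_and]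
          rcases max_choice (x i.castSucc) (x i.succ) with h | h
          · left; rw [← hib]; exact h.symm
          · right; rw [← hib]; exact h.symm
        refine (Finset.card_le_card hsub).trans ((Finset.card_union_le _ _).trans ?_)
        have c1 : (Finset.univ.filter (fun i : Fin t => x i.castSucc = b)).card ≤ 1 := by
          rw [Finset.card_le_one]
          intro i hi' j hj'
          simp only [Finset.mem_filter, Finset.mem_univ, true_and] at hi' hj'
          exact Fin.castSucc_injective _ (hinj (hi'.trans hj'.symm))
        have c2 : (Finset.univ.filter (fun i : Fin t => x i.succ = b)).card ≤ 1 := by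
          rw [Finset.card_le_one]
          intro i hi' j hj'
          simp only [Finset.mem_filter, Finset.mem_univ, true_and] at hi' hj'
          exact Fin.succ_injective _ (hinj (hi'.trans hj'.symm))
        omega
    omega
  obtain ⟨k, hk, hk'⟩ := hwin
  obtain ⟨l, hl, hl'⟩ := hacr
  rcases le_total k l with h | h
  · exact ⟨k, hk, by omega⟩
  · exact ⟨l, hl, by omega⟩

lemma ncst_map {n : ℕ} (r : Fin n ≃ Fin n)
    (hr : ∀ e f : Edge n, Cross (Sym2.map r e) (Sym2.map r f) → Cross e f)
    {T : Finset (Edge n)} (hT : NCST T) : NCST (T.image (Sym2.map r)) := by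
  refine ⟨⟨?_, ?_, ?_⟩, ?_⟩
  · refine SimpleGraph.Connected.map
      (G := SimpleGraph.fromEdgeSet (T : Set (Edge n))) ⟨r, ?_⟩ r.surjective hT.1.1
    intro a b hab
    rw [SimpleGraph.fromEdgeSet_adj] at hab ⊢
    refine ⟨?_, fun h => hab.2 (r.injective h)⟩
    rw [Finset.mem_coe, Finset.mem_image]
    exact ⟨s(a, b), hab.1, by simp⟩
  · rw [Finset.card_image_of_injective _ (Sym2.map.injective r.injective)]
    exact hT.1.2.1
  · intro e he
    obtain ⟨f, hf, rfl⟩ := Finset.mem_image.1 he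
    have := hT.1.2.2 f hf
    induction f using Sym2.ind with | _ a b
    simpa using this
  · intro e he f hf
    obtain ⟨e', he', rfl⟩ := Finset.mem_image.1 he
    obtain ⟨f', hf', rfl⟩ := Finset.mem_image.1 hf
    exact fun h => hT.2 e' he' f' hf' (hr _ _ h)

lemma flipSeq_map {n : ℕ} (r : Fin n ≃ Fin n)
    (hr : ∀ e f : Edge n, Cross (Sym2.map r e) (Sym2.map r f) → Cross e f)
    {T S : Finset (Edge n)} {k : ℕ} (h : FlipSeq T S k) :
    FlipSeq (T.image (Sym2.map r)) (S.image (Sym2.map r)) k := by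
  obtain ⟨f, h0, hk, hf⟩ := h
  refine ⟨fun i => (f i).image (Sym2.map r), by simp [h0], by simp [hk], ?_⟩
  intro i hi
  obtain ⟨h1, h2, e, he, g, hg, heq⟩ := hf i hi
  have hinj := Sym2.map.injective r.injective
  refine ⟨ncst_map r hr h1, ncst_map r hr h2, Sym2.map r e, Finset.mem_image_of_mem _ he,
    Sym2.map r g, ?_, ?_⟩
  · intro h
    obtain ⟨g', hg', h'⟩ := Finset.mem_image.1 h
    exact hg (hinj h' ▸ hg')
  · simp only [heq]
    rw [Finset.image_insert, Finset.image_erase hinj]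

/-- Order-free description of crossing. -/
lemma cross_iff_sep {n : ℕ} (a b c d : Fin n) : Cross s(a, b) s(c, d) ↔
    ((c : ℕ) ≠ a ∧ (c : ℕ) ≠ b ∧ (d : ℕ) ≠ a ∧ (d : ℕ) ≠ b ∧
      ¬ ((((a : ℕ) < c ∧ (c : ℕ) < b) ∨ ((b : ℕ) < c ∧ (c : ℕ) < a)) ↔
        (((a : ℕ) < d ∧ (d : ℕ) < b) ∨ ((b : ℕ) < d ∧ (d : ℕ) < a)))) := by
  rw [cross_iff]
  omega

/-- One shifted comparison. -/
lemma shift_sep (n a b c d : ℕ) (ha : a < n) (hb : b < n) (hc : c < n) (hd : d < n)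
    (hdb : d ≠ b) (hdc : d ≠ c) :
    ∀ b' c' d' : ℕ, b' = (if a ≤ b then b - a else b + n - a) →
    c' = (if a ≤ c then c - a else c + n - a) → d' = (if a ≤ d then d - a else d + n - a) →
    ((((b' < d' ∧ d' < c') ∨ (c' < d' ∧ d' < b')) ↔ ((b < d ∧ d < c) ∨ (c < d ∧ d < b))) ↔
      ((a ≤ b) ↔ (a ≤ c))) := by
  intro b' c' d' h1 h2 h3
  by_cases k1 : a ≤ b <;> by_cases k2 : a ≤ c <;> by_cases k3 : a ≤ d <;>
    simp only [k1, k2, k3, if_true, if_false] at h1 h2 h3 <;> omega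

lemma shift_ne (n a b d : ℕ) (ha : a < n) (hb : b < n) (hd : d < n) :
    (if a ≤ d then d - a else d + n - a) ≠ (if a ≤ b then b - a else b + n - a) ↔ d ≠ b := by
  split_ifs <;> omega

lemma sep_logic {P Q P' Q' K : Prop} (t1 : (P' ↔ P) ↔ K) (t2 : (Q' ↔ Q) ↔ K) :
    ¬ (P' ↔ Q') ↔ ¬ (P ↔ Q) := by
  by_cases P <;> by_cases Q <;> by_cases P' <;> by_cases Q' <;> by_cases K <;> simp_all

lemma rotation {n : ℕ} (a : Fin n) : ∃ r : Fin n ≃ Fin n, (r a : ℕ) = 0 ∧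
    ∀ e f : Edge n, Cross (Sym2.map r e) (Sym2.map r f) ↔ Cross e f := by
  let r : Fin n ≃ Fin n :=
    { toFun := fun i => ⟨if (a : ℕ) ≤ i then i - a else i + n - a, by split_ifs <;> omega⟩
      invFun := fun i => ⟨if (i : ℕ) + a < n then i + a else i + a - n, by split_ifs <;> omega⟩
      left_inv := by
        intro i
        ext
        simp only
        split_ifs <;> omega
      right_inv := by
        intro i
        ext
        simp only
        split_ifs <;> omega }
  have hr : ∀ i, (r i : ℕ) = if (a : ℕ) ≤ i then (i : ℕ) - a else i + n - a := fun i => rfl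
  refine ⟨r, by rw [hr]; simp, ?_⟩
  intro e f
  induction e using Sym2.ind with | _ b c
  induction f using Sym2.ind with | _ d e
  simp only [Sym2.map_mk]
  rw [cross_iff_sep, cross_iff_sep]
  have s1 := shift_sep n a b c d a.2 b.2 c.2 d.2
  have s2 := shift_sep n a b c e a.2 b.2 c.2 e.2
  have n1 := shift_ne n a b d a.2 b.2 d.2
  have n2 := shift_ne n a c d a.2 c.2 d.2
  have n3 := shift_ne n a b e a.2 b.2 e.2
  have n4 := shift_ne n a c e a.2 c.2 e.2
  rw [← hr, ← hr] at n1 n2 n3 n4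
  rw [n1, n2, n3, n4]
  refine and_congr_right fun m1 => and_congr_right fun m2 => and_congr_right fun m3 =>
    and_congr_right fun m4 => ?_
  have t1 := s1 m1 m2 _ _ _ (hr b) (hr c) (hr d)
  have t2 := s2 m3 m4 _ _ _ (hr b) (hr c) (hr e)
  exact sep_logic t1 t2

end SubpathFlip

/-- If `T₁` contains a subpath with `t` edges, there is a flip sequence between `T₁`
and `T₂` of length at most `2n - t/3`. -/
theorem subpath_flip {n t : ℕ} (T₁ T₂ : Finset (Edge n))
    (h₁ : NCST T₁) (h₂ : NCST T₂)
    (x : Fin (t + 1) → Fin n) (hinj : Function.Injective x)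
    (hpath : ∀ i : Fin t, s(x i.castSucc, x i.succ) ∈ T₁) :
    ∃ k : ℕ, FlipSeq T₁ T₂ k ∧ (k : ℝ) ≤ 2 * n - (t : ℝ) / 3 := by
  obtain ⟨r, hr0, hr⟩ := SubpathFlip.rotation (x 0)
  have hr1 : ∀ e f : Edge n, Cross (Sym2.map r e) (Sym2.map r f) → Cross e f :=
    fun e f => (hr e f).1
  have hr2 : ∀ e f : Edge n, Cross (Sym2.map r.symm e) (Sym2.map r.symm f) → Cross e f := by
    intro e f h
    have := (hr _ _).2 h
    simpa [Sym2.map_map] using this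
  obtain ⟨k, hk, hk'⟩ := SubpathFlip.main0 (T₁.image (Sym2.map r)) (T₂.image (Sym2.map r))
    (SubpathFlip.ncst_map r hr1 h₁) (SubpathFlip.ncst_map r hr1 h₂) (fun i => r (x i))
    (r.injective.comp hinj)
    (fun i => Finset.mem_image.2 ⟨_, hpath i, by simp⟩) hr0
  refine ⟨k, ?_, ?_⟩
  · have := SubpathFlip.flipSeq_map r.symm hr2 hk
    simpa [Finset.image_image, ← Sym2.map_comp] using this
  · have : (3 * k + t : ℝ) ≤ 6 * n := by exact_mod_cast hk'
    linarith
end
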